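/- arXiv:2206.02653 — 3 statements merged into one kernel-verified Lean document; each statement's English description precedes it below -/
import Mathlib

section
/- (Step (b) in the proof of Theorem 1.) Let M be a hierarchical MDP with target states T, σ̂ = ⊔_𝕀 σ_i the union of fixed locally optimal subpolicies, macro(M) the macro-MDP built from the same policies σ_i, and σ' any memoryless policy of M[σ̂] (equivalently of macro(M)). Then for every state s of macro(M): Pr_{M[σ̂][σ']}(s → ◊T) = Pr_{macro(M)[σ']}(s → ◊T) and ER_{M[σ̂][σ']}(s → ◊T) = ER_{macro(M)[σ']}(s → ◊T). -/
open scoped BigOperators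
open scoped Classical

/-- A (finite) Markov decision process: states `S`, actions `A`, an initial state,
transition probabilities, state rewards, and a set of target states. -/
structure MDP (S A : Type) [Fintype S] [Fintype A] where
  init : S
  P : S → A → S → ℝ
  r : S → ℝ
  target : Set S

namespace MDP

variable {S A : Type} [Fintype S] [Fintype A]

/-- Well-formedness of an MDP: transition probabilities are nonnegative, every
action row sums to `0` or `1`, and rewards are nonnegative. -/
def IsMDP (M : MDP S A) : Prop :=
  (∀ s a t, 0 ≤ M.P s a t) ∧
  (∀ s a, (∑ t, M.P s a t) = 0 ∨ (∑ t, M.P s a t) = 1) ∧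
  (∀ s, 0 ≤ M.r s)

/-- Probability that the Markov chain with kernel `step`, started in `s`,
first visits the set `T` at time `n`. -/
noncomputable def hitAt (step : S → S → ℝ) (T : Set S) : ℕ → S → ℝ
  | 0, s => if s ∈ T then 1 else 0
  | n + 1, s => if s ∈ T then 0 else ∑ t, step s t * hitAt step T n t

/-- Probability of eventually reaching `T` from `s` in the Markov chain `step`. -/
noncomputable def reach (step : S → S → ℝ) (T : Set S) (s : S) : ℝ :=
  ∑' n, hitAt step T n s

/-- `n`-step truncation of the expected reward accumulated strictly before reaching `T`. -/
noncomputable def erN (step : S → S → ℝ) (rew : S → ℝ) (T : Set S) : ℕ → S → ℝ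
  | 0, _ => 0
  | n + 1, s => if s ∈ T then 0 else rew s + ∑ t, step s t * erN step rew T n t

/-- Expected reward accumulated until reaching `T` (supremum of the truncations). -/
noncomputable def expRew (step : S → S → ℝ) (rew : S → ℝ) (T : Set S) (s : S) : ℝ :=
  ⨆ n, erN step rew T n s

/-- The kernel of the Markov chain induced by a memoryless policy `σ`. -/
def stepOf (M : MDP S A) (σ : S → A) : S → S → ℝ := fun s t => M.P s (σ s) t

/-- A memoryless policy selects an enabled action in every state. -/
def IsPolicy (M : MDP S A) (σ : S → A) : Prop := ∀ s, (∑ t, M.P s (σ s) t) ≠ 0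

/-- `Pr_{M[σ]}(s → ◊U)`. -/
noncomputable def PrR (M : MDP S A) (σ : S → A) (U : Set S) (s : S) : ℝ :=
  reach (M.stepOf σ) U s

/-- `ER_{M[σ]}(s → ◊T)` where `T` is the target set of `M`. -/
noncomputable def ER (M : MDP S A) (σ : S → A) (s : S) : ℝ :=
  expRew (M.stepOf σ) M.r M.target s

/-- `maxER_M(s → ◊T)`: the maximal expected reward over memoryless policies. -/
noncomputable def maxER (M : MDP S A) (s : S) : ℝ :=
  ⨆ σ : { σ : S → A // M.IsPolicy σ }, M.ER σ.1 s

/-- `maxER_M(◊T)` from the initial state. -/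
noncomputable def value (M : MDP S A) : ℝ := M.maxER M.init

/-- `M[τ]` for a partial policy `τ : S ⇸ A`: where `τ` is defined, only the chosen
action remains enabled; elsewhere `M` is unchanged. -/
noncomputable def restrict (M : MDP S A) (τ : S → Option A) : MDP S A :=
  { M with
    P := fun s a t =>
      match τ s with
      | some b => if a = b then M.P s a t else 0
      | none => M.P s a t }

end MDP
/-- A hierarchical MDP: an MDP together with (pairwise disjoint, nontrivial)
partitions `part i`, their entry states, and an enumeration `suc i` of the
(at most `Y`) successor states of each partition.  States outside every
`part i` are the trivial partitions. -/
structure HMDP (S A ι : Type) (Y : ℕ) [Fintype S] [Fintype A] [Fintype ι]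
    extends MDP S A where
  part : ι → Finset S
  entry : ι → S
  suc : ι → Fin Y → S

namespace HMDP

variable {S A ι : Type} {Y : ℕ} [Fintype S] [Fintype A] [Fintype ι]

/-- The successor states `succ(S_i) \ S_i` of partition `i`. -/
def succSet (H : HMDP S A ι Y) (i : ι) : Set S :=
  { t | t ∉ H.part i ∧ ∃ s ∈ H.part i, ∃ a, H.P s a t ≠ 0 }

/-- The hierarchical-MDP conditions: the partitions are pairwise disjoint and
nontrivial; `entry i` belongs to `part i` and is the initial state or has a
predecessor outside `part i`; every other state of `part i` is not the initial
state and has all its predecessors inside `part i`; `suc i` injectively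
enumerates (a superset of) the successor states of `part i`, all of them lying
outside `part i`; and target states are trivial states. -/
def IsHMDP (H : HMDP S A ι Y) : Prop :=
  (∀ i j, i ≠ j → Disjoint (H.part i) (H.part j)) ∧
  (∀ i, 2 ≤ (H.part i).card) ∧
  (∀ i, H.entry i ∈ H.part i) ∧
  (∀ i, H.entry i = H.init ∨ ∃ s a, s ∉ H.part i ∧ H.P s a (H.entry i) ≠ 0) ∧
  (∀ i, ∀ s ∈ H.part i, s ≠ H.entry i →
    s ≠ H.init ∧ ∀ s' a, H.P s' a s ≠ 0 → s' ∈ H.part i) ∧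
  (∀ i, Function.Injective (H.suc i) ∧ (∀ j, H.suc i j ∉ H.part i) ∧
    ∀ t ∈ H.succSet i, ∃ j, H.suc i j = t) ∧
  (∀ i, ∀ s ∈ H.part i, s ∉ H.target)

/-- The subMDP `M_i` of partition `i`: its states are the states of `H` plus a
fresh bottom state `none`; inside `part i` the original transitions and rewards
are kept, every state outside `part i` moves with probability 1 to the
(absorbing) bottom state via the fresh action `none` and has reward `0`;
the target is the bottom state. -/
noncomputable def subMDP (H : HMDP S A ι Y) (i : ι) : MDP (Option S) (Option A) where
  init := some (H.entry i)
  P := fun s a t =>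
    match s, a, t with
    | some s, some a, some t => if s ∈ H.part i then H.P s a t else 0
    | some s, none, none => if s ∈ H.part i then 0 else 1
    | none, none, none => 1
    | _, _, _ => 0
  r := fun s =>
    match s with
    | some s => if s ∈ H.part i then H.r s else 0
    | none => 0
  target := {none}

/-- `res_i(j)` for `j < Y`: the probability, under the policy `σs i` of the
subMDP `M_i`, of reaching the `j`-th successor state of partition `i`. -/
noncomputable def resP (H : HMDP S A ι Y) (σs : ι → Option S → Option A)
    (i : ι) (j : Fin Y) : ℝ :=
  (H.subMDP i).PrR (σs i) {some (H.suc i j)} (some (H.entry i))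

/-- `res_i(Y) = maxER_{M_i}(◊{⊥})`. -/
noncomputable def resE (H : HMDP S A ι Y) (i : ι) : ℝ :=
  (H.subMDP i).maxER (some (H.entry i))

/-- The result vector `res_i ∈ ℝ^{Y+1}` of subMDP `M_i` (Def. 7). -/
noncomputable def res (H : HMDP S A ι Y) (σs : ι → Option S → Option A) (i : ι) :
    Fin (Y + 1) → ℝ :=
  fun j => if h : (j : ℕ) < Y then H.resP σs i ⟨j, h⟩ else H.resE i

/-- The family `σs` consists of (locally) optimal policies of the subMDPs. -/
def LocallyOptimal (H : HMDP S A ι Y) (σs : ι → Option S → Option A) : Prop :=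
  ∀ i, (H.subMDP i).IsPolicy (σs i) ∧
    (H.subMDP i).ER (σs i) (some (H.entry i)) = (H.subMDP i).maxER (some (H.entry i))

/-- The partial policy `⊔_𝕀 σ_i` on `H` induced by subMDP policies `σs`. -/
noncomputable def liftPolicy (H : HMDP S A ι Y) (σs : ι → Option S → Option A) :
    S → Option A :=
  fun s => if h : ∃ i, s ∈ H.part i then σs h.choose (some s) else none

/-- `H` has optimal local subpolicies: applying any family of locally optimal
subMDP policies as a partial policy preserves the maximal expected reward. -/
def HasOptimalLocalSubpolicies (H : HMDP S A ι Y) : Prop :=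
  ∀ σs, H.LocallyOptimal σs →
    (H.toMDP.restrict (H.liftPolicy σs)).maxER H.init = H.toMDP.maxER H.init

/-- The macro-MDP of `H` (Def. 6), induced by fixed optimal subMDP policies `σs`:
at states of nontrivial partitions the transition probabilities are the subMDP
reachability probabilities of the successor states and the reward is the
maximal expected subMDP reward; trivial states keep their transitions and
rewards.  (Non-entry states of nontrivial partitions are unreachable.) -/
noncomputable def macroMDP (H : HMDP S A ι Y) (σs : ι → Option S → Option A) :
    MDP S A where
  init := H.init
  P := fun s a t =>
    if h : ∃ i, s ∈ H.part i then
      ∑ j, if t = H.suc h.choose j then H.resP σs h.choose j else 0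
    else H.P s a t
  r := fun s => if h : ∃ i, s ∈ H.part i then H.resE h.choose else H.r s
  target := H.target

end HMDP

/-!
Reachability probabilities and expected rewards of an absorbed Markov chain are unique solutions of
linear systems `x = b + L x`, where `L` is the transition operator killed on the target set. The
relevant property of `L` is transience, `L ^ n f → 0` for all `f` (`Decays`): it gives existence of
the solution (`1 - L` is injective, hence surjective), uniqueness, and convergence of the truncated
sums and rewards to it (`Decays.tendsto_iter`), in particular boundedness of the truncated rewards.
Almost sure absorption implies transience (`decays_of_reach`).

Since enabledness in the restricted MDP forces `σ'` to agree with the local policies `σs i`, the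
restricted chain is the chain of `M` under `σ'`, and the chain of `M_i` under `σs i` is that chain
run inside `part i` (`stepOf_subMDP`). If `f` satisfies `f s = ρ s + ∑ t, step s t * f t` on a
partition, the first-exit decomposition (`first_exit`) says that `f` at the entry state is the local
expected `ρ`-reward plus the average of `f` over the exit distribution: this is the one-step
equation of the macro chain. States of `M` which are neither trivial nor entry states are mapped to
the entry state of their partition by `rep`, so that `f ∘ rep` solves the macro system on all of `S`.

Three instances of the decomposition finish the proof. With `ρ = 1`, the expected number of steps in
`M` satisfies `1 + L v ≤ v` for the macro operator `L`, and this Lyapunov inequality makes the macro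
chain transient (`decays_of_lyapunov`). With `ρ = 0` and `f = 1`, the macro chain reaches the target
with probability `1`, as `M` does. With `ρ = r`, the expected rewards agree, because by local
optimality the expected reward under `σs i` is the maximal one used in the macro-MDP.
-/

namespace MacroAgree

open Filter Topology

/-! ### Transient operators -/

section Chain

variable {S : Type}

/-- Transience: the iterates of `L` tend to `0` pointwise on every function. -/
def Decays (L : Module.End ℝ (S → ℝ)) : Prop :=
  ∀ f, Tendsto (fun n => (L ^ n) f) atTop (𝓝 0)

lemma Decays.eq_zero {L : Module.End ℝ (S → ℝ)} (hL : Decays L) {w : S → ℝ}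
    (hw : L w = w) : w = 0 := by
  have h : ∀ n, (L ^ n) w = w := by
    intro n
    induction n with
    | zero => simp
    | succ n ih => rw [pow_succ, Module.End.mul_apply, hw, ih]
  have h2 := hL w
  simp only [h] at h2
  exact tendsto_nhds_unique tendsto_const_nhds h2

/-- For a transient `L` the operator `1 - L` is injective, hence surjective by finiteness of
the state space. -/
lemma Decays.exists_sol [Fintype S] {L : Module.End ℝ (S → ℝ)} (hL : Decays L) (b : S → ℝ) :
    ∃ x, x = b + L x := by
  have hinj : Function.Injective (1 - L : Module.End ℝ (S → ℝ)) := by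
    rw [injective_iff_map_eq_zero]
    intro w hw
    apply hL.eq_zero
    rw [LinearMap.sub_apply, Module.End.one_apply, sub_eq_zero] at hw
    exact hw.symm
  obtain ⟨x, hx⟩ := LinearMap.injective_iff_surjective.1 hinj b
  refine ⟨x, ?_⟩
  rw [← hx]
  simp

/-- The affine iteration `x ↦ b + L x` started in `0` converges to any of its fixed points. -/
lemma Decays.tendsto_iter {L : Module.End ℝ (S → ℝ)} (hL : Decays L) {b x : S → ℝ}
    (hx : x = b + L x) {y : ℕ → S → ℝ} (h0 : y 0 = 0) (hy : ∀ n, y (n + 1) = b + L (y n)) :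
    Tendsto y atTop (𝓝 x) := by
  have h : ∀ n, y n = x - (L ^ n) x := by
    intro n
    induction n with
    | zero => simp [h0]
    | succ n ih =>
      rw [hy, ih, map_sub, pow_succ', Module.End.mul_apply]
      nth_rewrite 3 [hx]
      abel
  have h2 := (tendsto_const_nhds (x := x)).sub (hL x)
  rw [sub_zero] at h2
  exact h2.congr fun n => (h n).symm

lemma pow_mono {L : Module.End ℝ (S → ℝ)} (hL : Monotone L) (n : ℕ) : Monotone (L ^ n) := by
  induction n with
  | zero => intro f g h; simpa using h
  | succ n ih =>
    intro f g h
    rw [pow_succ', Module.End.mul_apply, Module.End.mul_apply]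
    exact hL (ih h)

lemma squeeze {f g h : ℕ → S → ℝ} {a : S → ℝ} (hf : Tendsto f atTop (𝓝 a))
    (hh : Tendsto h atTop (𝓝 a)) (hfg : ∀ n, f n ≤ g n) (hgh : ∀ n, g n ≤ h n) :
    Tendsto g atTop (𝓝 a) :=
  tendsto_pi_nhds.2 fun s => tendsto_of_tendsto_of_tendsto_of_le_of_le (tendsto_pi_nhds.1 hf s)
    (tendsto_pi_nhds.1 hh s) (fun n => hfg n s) (fun n => hgh n s)

variable [Fintype S]

/-- For a monotone operator, decay on one function bounded below by `1` suffices. -/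
lemma decays_of_one_le {L : Module.End ℝ (S → ℝ)} (hL : Monotone L) {v : S → ℝ}
    (hv : ∀ s, 1 ≤ v s) (h : Tendsto (fun n => (L ^ n) v) atTop (𝓝 0)) : Decays L := by
  intro f
  have hK : ∀ s, |f s| ≤ (∑ t, |f t|) * v s := fun s =>
    calc |f s| ≤ ∑ t, |f t| :=
          Finset.single_le_sum (f := fun t => |f t|) (fun t _ => abs_nonneg _) (Finset.mem_univ s)
      _ ≤ _ := le_mul_of_one_le_right (Finset.sum_nonneg fun t _ => abs_nonneg _) (hv s)
  set K := ∑ t, |f t|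
  have hu : Tendsto (fun n => K • (L ^ n) v) atTop (𝓝 0) := by
    simpa using h.const_smul K
  have hl : Tendsto (fun n => -(K • (L ^ n) v)) atTop (𝓝 0) := by
    simpa using hu.neg
  refine squeeze hl hu (fun n => ?_) (fun n => ?_)
  · have := pow_mono hL n (show -(K • v) ≤ f from fun s => (abs_le.1 (hK s)).1)
    rwa [map_neg, map_smul] at this
  · have := pow_mono hL n (show f ≤ K • v from fun s => (abs_le.1 (hK s)).2)
    rwa [map_smul] at this

/-- Lyapunov criterion: a function `v ≥ 1 + L v`, `v ≥ 0`, forces geometric decay, since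
`L v ≤ v - 1 ≤ (1 - C⁻¹) v` as soon as `v ≤ C`. -/
lemma decays_of_lyapunov {L : Module.End ℝ (S → ℝ)} (hL : Monotone L) {v : S → ℝ}
    (h0 : 0 ≤ v) (hv : 1 + L v ≤ v) : Decays L := by
  have hLv : 0 ≤ L v := by simpa using hL h0
  have h1 : ∀ s, 1 ≤ v s := fun s => by
    have h2 := hv s
    have h3 := hLv s
    simp only [Pi.add_apply, Pi.one_apply, Pi.zero_apply] at h2 h3
    linarith
  set C : ℝ := 1 + ∑ t, v t
  have hC : ∀ s, v s ≤ C := fun s => by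
    have := Finset.single_le_sum (f := v) (fun t _ => h0 t) (Finset.mem_univ s)
    simp only [C]
    linarith
  have hC1 : 1 ≤ C := by
    have : 0 ≤ ∑ t, v t := Finset.sum_nonneg fun t _ => h0 t
    simp only [C]
    linarith
  have hC0 : 0 < C := by linarith
  have hc0 : 0 ≤ 1 - C⁻¹ := by
    have := inv_le_one_of_one_le₀ hC1
    linarith
  have hc1 : 1 - C⁻¹ < 1 := by
    have := inv_pos.2 hC0
    linarith
  have hstep : L v ≤ (1 - C⁻¹) • v := fun s => by
    have h2 := hv s
    have h3 : C⁻¹ * v s ≤ 1 := by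
      rw [inv_mul_le_iff₀ hC0]
      simpa using hC s
    simp only [Pi.add_apply, Pi.one_apply, Pi.smul_apply, smul_eq_mul] at h2 ⊢
    linarith
  have hpow : ∀ n, (L ^ n) v ≤ (1 - C⁻¹) ^ n • v := by
    intro n
    induction n with
    | zero => simp
    | succ n ih =>
      calc (L ^ (n + 1)) v = L ((L ^ n) v) := by rw [pow_succ', Module.End.mul_apply]
        _ ≤ L ((1 - C⁻¹) ^ n • v) := hL ih
        _ = (1 - C⁻¹) ^ n • L v := map_smul _ _ _
        _ ≤ (1 - C⁻¹) ^ n • ((1 - C⁻¹) • v) := smul_le_smul_of_nonneg_left hstep (pow_nonneg hc0 n)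
        _ = _ := by rw [smul_smul, pow_succ]
  refine decays_of_one_le hL h1 ?_
  refine squeeze tendsto_const_nhds ?_ (fun n => ?_) hpow
  · simpa using (tendsto_pow_atTop_nhds_zero_of_lt_one hc0 hc1).smul_const v
  · simpa using pow_mono hL n h0

/-! ### Killed transition operators -/

/-- The transition operator of the chain `step` killed on `T`: it maps `f` to
`s ↦ ∑ t, step s t * f t` off `T` and to `0` on `T`. -/
noncomputable def kill (step : S → S → ℝ) (T : Set S) : Module.End ℝ (S → ℝ) where
  toFun f s := if s ∈ T then 0 else ∑ t, step s t * f t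
  map_add' f g := by
    ext s
    by_cases h : s ∈ T <;> simp [h, mul_add, Finset.sum_add_distrib]
  map_smul' c f := by
    ext s
    by_cases h : s ∈ T <;> simp [h, Finset.mul_sum, mul_left_comm]

lemma kill_apply (step : S → S → ℝ) (T : Set S) (f : S → ℝ) (s : S) :
    kill step T f s = if s ∈ T then 0 else ∑ t, step s t * f t := rfl

lemma kill_mono {step : S → S → ℝ} (hs : ∀ s t, 0 ≤ step s t) (T : Set S) :
    Monotone (kill step T) := by
  intro f g hfg s
  rw [kill_apply, kill_apply]
  split_ifs
  · exact le_rfl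
  · exact Finset.sum_le_sum fun t _ => mul_le_mul_of_nonneg_left (hfg t) (hs s t)

/-! ### Reachability and expected reward as solutions of linear systems -/

lemma sum_hitAt_succ (step : S → S → ℝ) (U : Set S) (n : ℕ) (s : S) :
    ∑ k ∈ Finset.range (n + 1), MDP.hitAt step U k s =
      (if s ∈ U then 1 else 0) +
        kill step U (fun t => ∑ k ∈ Finset.range n, MDP.hitAt step U k t) s := by
  rw [Finset.sum_range_succ', kill_apply, add_comm]
  congr 1
  by_cases h : s ∈ U
  · simp [MDP.hitAt, h]
  · simp only [MDP.hitAt, h, if_false, Finset.mul_sum]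
    exact Finset.sum_comm

lemma hitAt_nonneg {step : S → S → ℝ} (hs : ∀ s t, 0 ≤ step s t) (U : Set S) (n : ℕ) (s : S) :
    0 ≤ MDP.hitAt step U n s := by
  induction n generalizing s with
  | zero => simp only [MDP.hitAt]; split_ifs <;> simp
  | succ n ih =>
    simp only [MDP.hitAt]
    split_ifs
    · exact le_rfl
    · exact Finset.sum_nonneg fun t _ => mul_nonneg (hs s t) (ih t)

lemma sum_hitAt_le_one {step : S → S → ℝ} (hs : ∀ s t, 0 ≤ step s t) (h1 : ∀ s, ∑ t, step s t = 1)
    (U : Set S) (n : ℕ) (s : S) : ∑ k ∈ Finset.range n, MDP.hitAt step U k s ≤ 1 := by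
  induction n generalizing s with
  | zero => simp
  | succ n ih =>
    rw [sum_hitAt_succ, kill_apply]
    split_ifs
    · simp
    · rw [zero_add, ← h1 s]
      exact Finset.sum_le_sum fun t _ => mul_le_of_le_one_right (hs s t) (ih t)

lemma summable_hitAt {step : S → S → ℝ} (hs : ∀ s t, 0 ≤ step s t) (h1 : ∀ s, ∑ t, step s t = 1)
    (U : Set S) (s : S) : Summable fun n => MDP.hitAt step U n s :=
  summable_of_sum_range_le (fun n => hitAt_nonneg hs U n s) fun n => sum_hitAt_le_one hs h1 U n s

lemma tendsto_sum_hitAt {step : S → S → ℝ} (hs : ∀ s t, 0 ≤ step s t)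
    (h1 : ∀ s, ∑ t, step s t = 1) (U : Set S) :
    Tendsto (fun n s => ∑ k ∈ Finset.range n, MDP.hitAt step U k s) atTop
      (𝓝 (MDP.reach step U)) :=
  tendsto_pi_nhds.2 fun s => (summable_hitAt hs h1 U s).hasSum.tendsto_sum_nat

lemma reach_of_mem {step : S → S → ℝ} {U : Set S} {s : S} (h : s ∈ U) :
    MDP.reach step U s = 1 := by
  rw [MDP.reach, tsum_eq_single 0]
  · simp [MDP.hitAt, h]
  · intro n hn
    obtain ⟨m, rfl⟩ := Nat.exists_eq_succ_of_ne_zero hn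
    simp [MDP.hitAt, h]

lemma reach_of_notMem {step : S → S → ℝ} (hs : ∀ s t, 0 ≤ step s t)
    (h1 : ∀ s, ∑ t, step s t = 1) {U : Set S} {s : S} (h : s ∉ U) :
    MDP.reach step U s = ∑ t, step s t * MDP.reach step U t := by
  have hl := ((tendsto_pi_nhds.1 (tendsto_sum_hitAt hs h1 U)) s).comp (tendsto_add_atTop_nat 1)
  have hr : Tendsto (fun n => ∑ t, step s t * ∑ k ∈ Finset.range n, MDP.hitAt step U k t) atTop
      (𝓝 (∑ t, step s t * MDP.reach step U t)) :=
    tendsto_finsetSum _ fun t _ =>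
      ((tendsto_pi_nhds.1 (tendsto_sum_hitAt hs h1 U)) t).const_mul _
  refine tendsto_nhds_unique hl (hr.congr fun n => ?_)
  simp only [Function.comp_apply]
  rw [sum_hitAt_succ, kill_apply, if_neg h, if_neg h, zero_add]

/-- If no state outside `U` has a transition into `U`, then `U` is unreachable from outside. -/
lemma reach_eq_zero {step : S → S → ℝ} {U : Set S}
    (hU : ∀ s ∉ U, ∀ t ∈ U, step s t = 0) {s : S} (h : s ∉ U) : MDP.reach step U s = 0 := by
  have h0 : ∀ n, ∀ s ∉ U, MDP.hitAt step U n s = 0 := by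
    intro n
    induction n with
    | zero => intro s hs; simp [MDP.hitAt, hs]
    | succ n ih =>
      intro s hs
      simp only [MDP.hitAt, hs, if_false]
      refine Finset.sum_eq_zero fun t _ => ?_
      by_cases ht : t ∈ U
      · rw [hU s hs t ht, zero_mul]
      · rw [ih t ht, mul_zero]
  simp [MDP.reach, h0 _ s h]

/-- A state whose only transition is a self-loop never reaches a set not containing it. -/
lemma reach_eq_zero_of_loop {step : S → S → ℝ} {U : Set S} {s : S} (h : s ∉ U)
    (hs : ∀ t, t ≠ s → step s t = 0) : MDP.reach step U s = 0 := by
  have h0 : ∀ n, MDP.hitAt step U n s = 0 := by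
    intro n
    induction n with
    | zero => simp [MDP.hitAt, h]
    | succ n ih =>
      simp only [MDP.hitAt, h, if_false]
      refine Finset.sum_eq_zero fun t _ => ?_
      by_cases ht : t = s
      · rw [ht, ih, mul_zero]
      · rw [hs t ht, zero_mul]
  simp [MDP.reach, h0]

/-- Almost sure absorption in `T` makes the killed chain transient: `L ^ n 1` is the probability
of not having hit `T` before time `n`. -/
lemma decays_of_reach {step : S → S → ℝ} (hs : ∀ s t, 0 ≤ step s t)
    (h1 : ∀ s, ∑ t, step s t = 1) {T : Set S} (hT : ∀ s, MDP.reach step T s = 1) :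
    Decays (kill step T) := by
  refine decays_of_one_le (kill_mono hs T) (v := 1) (fun s => le_rfl) ?_
  have hlim := (tendsto_const_nhds (x := (1 : S → ℝ))).sub (tendsto_sum_hitAt hs h1 T)
  have h2 : MDP.reach step T = 1 := funext hT
  rw [h2, sub_self] at hlim
  refine hlim.congr fun n => ?_
  induction n with
  | zero => funext s; simp
  | succ n ih =>
    rw [pow_succ', Module.End.mul_apply, ← ih, map_sub]
    funext s
    simp only [Pi.sub_apply]
    rw [sum_hitAt_succ, kill_apply _ _ 1]
    by_cases h : s ∈ T <;> simp [h, h1, kill_apply]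

/-- For a transient killed chain, the reachability probability is the solution of its linear
system. -/
lemma reach_eq_of_sol {step : S → S → ℝ} (hs : ∀ s t, 0 ≤ step s t) {T : Set S}
    (hL : Decays (kill step T)) {x : S → ℝ}
    (hx : x = (fun s => if s ∈ T then 1 else 0) + kill step T x) : MDP.reach step T = x := by
  have h := hL.tendsto_iter hx (y := fun n s => ∑ k ∈ Finset.range n, MDP.hitAt step T k s)
    (by funext s; simp) (fun n => by funext s; exact sum_hitAt_succ step T n s)
  funext s
  exact ((hasSum_iff_tendsto_nat_of_nonneg (fun n => hitAt_nonneg hs T n s) _).2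
    (tendsto_pi_nhds.1 h s)).tsum_eq

/-- For a transient killed chain, the expected reward is the solution of its linear system;
in particular the truncated rewards are bounded, so the supremum is not a junk value. -/
lemma expRew_eq_of_sol {step : S → S → ℝ} (hs : ∀ s t, 0 ≤ step s t) {rew : S → ℝ}
    (hr : ∀ s, 0 ≤ rew s) {T : Set S} (hL : Decays (kill step T)) {x : S → ℝ}
    (hx : x = (fun s => if s ∈ T then 0 else rew s) + kill step T x) :
    MDP.expRew step rew T = x := by
  have hsucc : ∀ n, MDP.erN step rew T (n + 1) =
      (fun s => if s ∈ T then 0 else rew s) + kill step T (MDP.erN step rew T n) := by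
    intro n
    funext s
    by_cases h : s ∈ T <;> simp [MDP.erN, kill_apply, h]
  have h := hL.tendsto_iter hx (y := MDP.erN step rew T) rfl hsucc
  have hmono : Monotone (MDP.erN step rew T) := by
    refine monotone_nat_of_le_succ fun n => ?_
    induction n with
    | zero =>
      rw [hsucc]
      intro s
      simp only [MDP.erN, Pi.add_apply, kill_apply]
      split_ifs <;> simp [hr s]
    | succ n ih =>
      rw [hsucc (n + 1), hsucc n]
      gcongr
      exact kill_mono hs T (by rw [← hsucc]; exact ih)
  funext s
  exact tendsto_nhds_unique
    (tendsto_atTop_ciSup (fun m n hmn => hmono hmn s)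
      (tendsto_pi_nhds.1 h s).bddAbove_range) (tendsto_pi_nhds.1 h s)

end Chain

/-- A solution `x = b + L x` of a transient monotone system with `b ≥ 0` satisfies
`x ≥ L x ≥ L ^ 2 x ≥ …`, hence is nonnegative. -/
lemma Decays.sol_nonneg {S : Type} {L : Module.End ℝ (S → ℝ)} (hL : Decays L) (hm : Monotone L)
    {b x : S → ℝ} (hb : 0 ≤ b) (hx : x = b + L x) : 0 ≤ x := by
  have hLx : L x ≤ x := by
    intro s
    have h1 := congrFun hx s
    have h2 := hb s
    simp only [Pi.add_apply, Pi.zero_apply] at h1 h2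
    linarith
  have h : ∀ n, (L ^ n) x ≤ x := by
    intro n
    induction n with
    | zero => simp
    | succ n ih =>
      rw [pow_succ, Module.End.mul_apply]
      exact (pow_mono hm n hLx).trans ih
  exact fun s => le_of_tendsto' (tendsto_pi_nhds.1 (hL x) s) fun n => h n s

/-! ### The chain inside one partition -/

section Sub

variable {S : Type}

/-- The kernel of the chain `step` run inside `B`: from a state outside `B` it moves to the
absorbing bottom state `none`. -/
noncomputable def sub (step : S → S → ℝ) (B : Finset S) : Option S → Option S → ℝ
  | some s, some t => if s ∈ B then step s t else 0
  | some s, none => if s ∈ B then 0 else 1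
  | none, some _ => 0
  | none, none => 1

/-- The reward `ρ` on `B`, extended by `0` to the other states of the chain `sub`. -/
noncomputable def subRew (B : Finset S) (ρ : S → ℝ) : Option S → ℝ
  | some s => if s ∈ B then ρ s else 0
  | none => 0

variable {step : S → S → ℝ} {B : Finset S}

lemma subRew_nonneg {ρ : S → ℝ} (hρ : ∀ s, 0 ≤ ρ s) (x : Option S) : 0 ≤ subRew B ρ x := by
  rcases x with _ | s
  · exact le_rfl
  · simp only [subRew]
    split_ifs
    exacts [hρ s, le_rfl]

lemma sub_nonneg' (hs : ∀ s t, 0 ≤ step s t) (x y : Option S) : 0 ≤ sub step B x y := by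
  rcases x with _ | s <;> rcases y with _ | t <;> simp only [sub]
  · exact zero_le_one
  · exact le_rfl
  · split_ifs <;> simp
  · split_ifs
    exacts [hs s t, le_rfl]

variable [Fintype S]

lemma sum_sub (f : Option S → ℝ) (s : S) :
    ∑ y, sub step B (some s) y * f y =
      if s ∈ B then ∑ t, step s t * f (some t) else f none := by
  rw [Fintype.sum_option]
  by_cases h : s ∈ B <;> simp [sub, h]

lemma sub_sum_one (h1 : ∀ s, ∑ t, step s t = 1) (x : Option S) : ∑ y, sub step B x y = 1 := by
  rcases x with _ | s
  · simp [Fintype.sum_option, sub]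
  · have := sum_sub (step := step) (B := B) (fun _ => 1) s
    simpa [h1] using this

lemma reach_sub_mem (hs : ∀ s t, 0 ≤ step s t) (h1 : ∀ s, ∑ t, step s t = 1) {u : S} (hu : u ∉ B)
    {s : S} (h : s ∈ B) :
    MDP.reach (sub step B) {some u} (some s) =
      ∑ t, step s t * MDP.reach (sub step B) {some u} (some t) := by
  have hne : some s ∉ ({some u} : Set (Option S)) := by
    rintro ⟨⟩
    exact hu h
  rw [reach_of_notMem (sub_nonneg' hs) (sub_sum_one h1) hne, sum_sub, if_pos h]

lemma reach_sub_notMem (hs : ∀ s t, 0 ≤ step s t) (h1 : ∀ s, ∑ t, step s t = 1) {u : S}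
    {s : S} (h : s ∉ B) :
    MDP.reach (sub step B) {some u} (some s) = if s = u then 1 else 0 := by
  split_ifs with hsu
  · exact reach_of_mem (by simp [hsu])
  · have hne : some s ∉ ({some u} : Set (Option S)) := by
      simpa using hsu
    rw [reach_of_notMem (sub_nonneg' hs) (sub_sum_one h1) hne, sum_sub, if_neg h]
    refine reach_eq_zero_of_loop (by simp) fun t ht => ?_
    rcases t with _ | t
    · exact absurd rfl ht
    · rfl

/-- `e` is the expected reward accumulated inside `B`: it vanishes off `B` and satisfies the
one-step equation on `B`. -/
def IsLocalValue (step : S → S → ℝ) (B : Finset S) (ρ e : S → ℝ) : Prop :=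
  (∀ s ∉ B, e s = 0) ∧ ∀ s ∈ B, e s = ρ s + ∑ t, step s t * e t

lemma exists_localValue (hs : ∀ s t, 0 ≤ step s t)
    (hd : Decays (kill (sub step B) {none})) {ρ : S → ℝ} (hρ : ∀ s, 0 ≤ ρ s) :
    ∃ e : S → ℝ, IsLocalValue step B ρ e ∧ (∀ s, 0 ≤ e s) ∧
      ∀ s, MDP.expRew (sub step B) (subRew B ρ) {none} (some s) = e s := by
  obtain ⟨x, hx⟩ := hd.exists_sol (fun y => if y ∈ ({none} : Set (Option S)) then 0
    else subRew B ρ y)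
  have hpos : 0 ≤ x := by
    refine hd.sol_nonneg (kill_mono (sub_nonneg' hs) _) (fun y => ?_) hx
    dsimp only [Pi.zero_apply]
    split_ifs
    exacts [le_rfl, subRew_nonneg hρ y]
  have hnone : x none = 0 := by
    rw [hx]
    simp [kill_apply]
  have hsome : ∀ s, x (some s) = subRew B ρ (some s) +
      if s ∈ B then ∑ t, step s t * x (some t) else x none := by
    intro s
    have h := congrFun hx (some s)
    rw [Pi.add_apply, kill_apply, if_neg (by simp), if_neg (by simp), sum_sub] at h
    exact h
  refine ⟨fun s => x (some s), ⟨fun s h => ?_, fun s h => ?_⟩, fun s => hpos _, fun s => ?_⟩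
  · dsimp only
    rw [hsome]
    simp [subRew, h, hnone]
  · dsimp only
    rw [hsome s]
    simp [subRew, h]
  · rw [expRew_eq_of_sol (sub_nonneg' hs) (subRew_nonneg hρ) hd (by convert hx)]

/-- First-exit decomposition: a solution `f` of the one-step equations on `B` equals the local
expected reward plus the average of `f` over the exit distribution.  The difference of the two
sides, extended by `0` off `B`, is a fixed point of a transient operator. -/
lemma first_exit (hs : ∀ s t, 0 ≤ step s t) (h1 : ∀ s, ∑ t, step s t = 1)
    (hd : Decays (kill (sub step B) {none})) {ρ e f : S → ℝ} (he : IsLocalValue step B ρ e)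
    (hf : ∀ s ∈ B, f s = ρ s + ∑ t, step s t * f t) {Y : ℕ} {suc : Fin Y → S}
    (hinj : Function.Injective suc) (hout : ∀ j, suc j ∉ B)
    (hsuc : ∀ s ∈ B, ∀ t ∉ B, step s t ≠ 0 → ∃ j, suc j = t) :
    ∀ s ∈ B, f s = e s + ∑ j, MDP.reach (sub step B) {some (suc j)} (some s) * f (suc j) := by
  set g : S → ℝ := fun s =>
    f s - e s - ∑ j, MDP.reach (sub step B) {some (suc j)} (some s) * f (suc j) with hg
  have hgB : ∀ s ∈ B, g s = ∑ t, step s t * g t := by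
    intro s h
    have hswap : ∑ j, MDP.reach (sub step B) {some (suc j)} (some s) * f (suc j) =
        ∑ t, step s t *
          ∑ j, MDP.reach (sub step B) {some (suc j)} (some t) * f (suc j) := by
      simp only [reach_sub_mem hs h1 (hout _) h, Finset.sum_mul, Finset.mul_sum, mul_assoc]
      exact Finset.sum_comm
    simp only [hg, mul_sub, Finset.sum_sub_distrib]
    rw [hswap, hf s h, he.2 s h]
    ring
  have hgout : ∀ s ∈ B, ∀ t ∉ B, step s t * g t = 0 := by
    intro s h t ht
    by_cases h0 : step s t = 0
    · rw [h0, zero_mul]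
    obtain ⟨k, rfl⟩ := hsuc s h t ht h0
    simp [hg, he.1 _ ht, reach_sub_notMem hs h1 ht, hinj.eq_iff]
  have hw := hd.eq_zero (w := subRew B g) (by
    funext x
    rw [kill_apply]
    rcases x with _ | s
    · simp [subRew]
    · rw [if_neg (by simp), sum_sub]
      by_cases h : s ∈ B
      · simp only [subRew, h, if_true]
        rw [hgB s h]
        refine Finset.sum_congr rfl fun t _ => ?_
        by_cases ht : t ∈ B
        · rw [if_pos ht]
        · rw [if_neg ht, mul_zero, hgout s h t ht]
      · simp [subRew, h])
  intro s h
  have h2 := congrFun hw (some s)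
  simp only [subRew, h, if_true, Pi.zero_apply, hg] at h2
  linarith

end Sub

/-! ### The macro chain -/

section Macro

variable {S A ι : Type} {Y : ℕ} [Fintype S] [Fintype A] [Fintype ι] {H : HMDP S A ι Y}

lemma eq_of_mem (hH : H.IsHMDP) {i j : ι} {s : S} (hi : s ∈ H.part i) (hj : s ∈ H.part j) :
    i = j := by
  by_contra hne
  exact Finset.disjoint_left.1 (hH.1 i j hne) hi hj

lemma choose_eq (hH : H.IsHMDP) {i : ι} {s : S} (hi : s ∈ H.part i)
    (h : ∃ i, s ∈ H.part i) : h.choose = i :=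
  eq_of_mem hH h.choose_spec hi

/-- The representative of a state in the macro-MDP: the entry state of its partition, or the
state itself if it is trivial.  Rows of the macro kernel depend on `rep s` only. -/
noncomputable def rep (H : HMDP S A ι Y) (s : S) : S :=
  if h : ∃ i, s ∈ H.part i then H.entry h.choose else s

lemma rep_of_mem (hH : H.IsHMDP) {i : ι} {s : S} (hi : s ∈ H.part i) : rep H s = H.entry i := by
  have h : ∃ i, s ∈ H.part i := ⟨i, hi⟩
  rw [rep, dif_pos h, choose_eq hH hi]

lemma rep_of_trivial {s : S} (h : ¬ ∃ i, s ∈ H.part i) : rep H s = s := dif_neg h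

lemma rep_eq_self (hH : H.IsHMDP) {s : S} (hs : ∀ i, s ∈ H.part i → s = H.entry i) :
    rep H s = s := by
  by_cases h : ∃ i, s ∈ H.part i
  · obtain ⟨i, hi⟩ := h
    rw [rep_of_mem hH hi, ← hs i hi]
  · exact rep_of_trivial h

/-- A state entered from outside its partition is trivial or an entry state. -/
lemma rep_eq_self_of_step (hH : H.IsHMDP) {s t : S} {a : A} (hst : H.P s a t ≠ 0)
    (h : ∀ i, t ∈ H.part i → s ∉ H.part i) : rep H t = t := by
  refine rep_eq_self hH fun i hi => ?_
  by_contra hne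
  exact h i hi ((hH.2.2.2.2.1 i t hi hne).2 s a hst)

variable {σs : ι → Option S → Option A} {σ' : S → A}

lemma sub_action_mem {i : ι} {s : S} (hpol : (H.subMDP i).IsPolicy (σs i)) (hi : s ∈ H.part i) :
    ∃ b, σs i (some s) = some b := by
  rcases h : σs i (some s) with _ | b
  · refine absurd ?_ (hpol (some s))
    rw [h, Fintype.sum_option]
    simp [HMDP.subMDP, hi]
  · exact ⟨b, rfl⟩

lemma sub_action_notMem {i : ι} {s : S} (hpol : (H.subMDP i).IsPolicy (σs i))
    (hi : s ∉ H.part i) : σs i (some s) = none := by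
  rcases h : σs i (some s) with _ | b
  · rfl
  · refine absurd ?_ (hpol (some s))
    rw [h, Fintype.sum_option]
    simp [HMDP.subMDP, hi]

lemma sub_action_none {i : ι} (hpol : (H.subMDP i).IsPolicy (σs i)) : σs i none = none := by
  rcases h : σs i none with _ | b
  · rfl
  · refine absurd ?_ (hpol none)
    rw [h, Fintype.sum_option]
    simp [HMDP.subMDP]

/-- Enabledness in the restricted MDP forces `σ'` to agree with the local policies. -/
lemma sub_action_eq (hH : H.IsHMDP) (hσs : H.LocallyOptimal σs)
    (hσ' : (H.toMDP.restrict (H.liftPolicy σs)).IsPolicy σ') {i : ι} {s : S}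
    (hi : s ∈ H.part i) : σs i (some s) = some (σ' s) := by
  obtain ⟨b, hb⟩ := sub_action_mem (hσs i).1 hi
  have hl : H.liftPolicy σs s = some b := by
    have h : ∃ i, s ∈ H.part i := ⟨i, hi⟩
    rw [HMDP.liftPolicy, dif_pos h, choose_eq hH hi, hb]
  by_cases hab : σ' s = b
  · rw [hb, hab]
  · refine absurd ?_ (hσ' s)
    simp [MDP.restrict, hl, hab]

lemma stepOf_restrict (hH : H.IsHMDP) (hσs : H.LocallyOptimal σs)
    (hσ' : (H.toMDP.restrict (H.liftPolicy σs)).IsPolicy σ') :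
    (H.toMDP.restrict (H.liftPolicy σs)).stepOf σ' = H.toMDP.stepOf σ' := by
  funext s t
  simp only [MDP.stepOf, MDP.restrict]
  by_cases h : ∃ i, s ∈ H.part i
  · obtain ⟨i, hi⟩ := h
    have hl : H.liftPolicy σs s = some (σ' s) := by
      have h : ∃ i, s ∈ H.part i := ⟨i, hi⟩
      rw [HMDP.liftPolicy, dif_pos h, choose_eq hH hi, sub_action_eq hH hσs hσ' hi]
    simp [hl]
  · have hl : H.liftPolicy σs s = none := by
      rw [HMDP.liftPolicy, dif_neg h]
    simp [hl]

lemma stepOf_subMDP (hH : H.IsHMDP) (hσs : H.LocallyOptimal σs)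
    (hσ' : (H.toMDP.restrict (H.liftPolicy σs)).IsPolicy σ') (i : ι) :
    (H.subMDP i).stepOf (σs i) = sub (H.toMDP.stepOf σ') (H.part i) := by
  funext x y
  rw [MDP.stepOf]
  rcases x with _ | s
  · rw [sub_action_none (hσs i).1]
    rcases y with _ | t <;> rfl
  · by_cases hi : s ∈ H.part i
    · rw [sub_action_eq hH hσs hσ' hi]
      rcases y with _ | t <;> simp [HMDP.subMDP, sub, hi, MDP.stepOf]
    · rw [sub_action_notMem (hσs i).1 hi]
      rcases y with _ | t <;> simp [HMDP.subMDP, sub, hi]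

lemma sum_macro_mem (hH : H.IsHMDP) {i : ι} {s : S} (hi : s ∈ H.part i) (f : S → ℝ) :
    ∑ t, (H.macroMDP σs).stepOf σ' s t * f t = ∑ j, H.resP σs i j * f (H.suc i j) := by
  have h : ∃ i, s ∈ H.part i := ⟨i, hi⟩
  simp only [MDP.stepOf, HMDP.macroMDP, dif_pos h, choose_eq hH hi, Finset.sum_mul]
  rw [Finset.sum_comm]
  refine Finset.sum_congr rfl fun j _ => ?_
  simp

lemma macro_trivial {s : S} (h : ¬ ∃ i, s ∈ H.part i) (t : S) :
    (H.macroMDP σs).stepOf σ' s t = H.toMDP.stepOf σ' s t := by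
  simp only [MDP.stepOf, HMDP.macroMDP, dif_neg h]

/-- At a trivial state, the values on representatives have the same average under the macro
kernel as the original values under the original kernel. -/
lemma macro_eq_trivial (hH : H.IsHMDP) {s : S} (h : ¬ ∃ i, s ∈ H.part i) (f : S → ℝ) :
    ∑ t, (H.macroMDP σs).stepOf σ' s t * f (rep H t) = ∑ t, H.toMDP.stepOf σ' s t * f t := by
  refine Finset.sum_congr rfl fun t _ => ?_
  rw [macro_trivial h]
  by_cases h0 : H.toMDP.stepOf σ' s t = 0
  · rw [h0, zero_mul, zero_mul]
  · rw [rep_eq_self_of_step hH h0 fun i _ hs => h ⟨i, hs⟩]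

lemma resP_eq (hH : H.IsHMDP) (hσs : H.LocallyOptimal σs)
    (hσ' : (H.toMDP.restrict (H.liftPolicy σs)).IsPolicy σ') (i : ι) (j : Fin Y) :
    H.resP σs i j =
      MDP.reach (sub (H.toMDP.stepOf σ') (H.part i)) {some (H.suc i j)} (some (H.entry i)) := by
  rw [HMDP.resP, MDP.PrR, stepOf_subMDP hH hσs hσ']

/-- A superfluous state in the enumeration `suc i`, which is no successor of the partition, is
reached with probability `0`; genuine successors are trivial or entry states. -/
lemma resP_mul_rep (hH : H.IsHMDP) (hσs : H.LocallyOptimal σs)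
    (hσ' : (H.toMDP.restrict (H.liftPolicy σs)).IsPolicy σ') (i : ι) (j : Fin Y) (f : S → ℝ) :
    H.resP σs i j * f (rep H (H.suc i j)) = H.resP σs i j * f (H.suc i j) := by
  have hout : H.suc i j ∉ H.part i := (hH.2.2.2.2.2.1 i).2.1 j
  by_cases h : ∃ s ∈ H.part i, H.toMDP.stepOf σ' s (H.suc i j) ≠ 0
  · obtain ⟨s, hs, h0⟩ := h
    rw [rep_eq_self_of_step hH h0]
    intro k hk hsk
    exact hout (eq_of_mem hH hsk hs ▸ hk)
  · push Not at h
    have h0 : H.resP σs i j = 0 := by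
      rw [resP_eq hH hσs hσ']
      refine reach_eq_zero (fun x hx y hy => ?_) ?_
      · obtain rfl : y = some (H.suc i j) := hy
        rcases x with _ | s
        · rfl
        · by_cases hs : s ∈ H.part i
          · simp [sub, hs, h s hs]
          · simp [sub, hs]
      · simp only [Set.mem_singleton_iff, Option.some.injEq]
        intro heq
        exact hout (heq ▸ hH.2.2.1 i)
    rw [h0, zero_mul, zero_mul]

/-- First-exit decomposition at a nontrivial partition, in terms of the macro kernel. -/
lemma macro_eq_mem (hH : H.IsHMDP) (hσs : H.LocallyOptimal σs)
    (hσ' : (H.toMDP.restrict (H.liftPolicy σs)).IsPolicy σ')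
    (hs : ∀ s t, 0 ≤ H.toMDP.stepOf σ' s t) (h1 : ∀ s, ∑ t, H.toMDP.stepOf σ' s t = 1) {i : ι}
    (hd : Decays (kill (sub (H.toMDP.stepOf σ') (H.part i)) {none})) {ρ e f : S → ℝ}
    (he : IsLocalValue (H.toMDP.stepOf σ') (H.part i) ρ e)
    (hf : ∀ s ∈ H.part i, f s = ρ s + ∑ t, H.toMDP.stepOf σ' s t * f t)
    {s : S} (hi : s ∈ H.part i) :
    f (rep H s) = e (H.entry i) + ∑ t, (H.macroMDP σs).stepOf σ' s t * f (rep H t) := by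
  obtain ⟨hinj, hout, hsuc⟩ := hH.2.2.2.2.2.1 i
  rw [sum_macro_mem hH hi (fun t => f (rep H t)), rep_of_mem hH hi,
    first_exit hs h1 hd he hf hinj hout
      (fun s hs t ht h0 => hsuc t ⟨ht, s, hs, σ' s, h0⟩) _ (hH.2.2.1 i)]
  congr 1
  refine Finset.sum_congr rfl fun j _ => ?_
  rw [resP_mul_rep hH hσs hσ', resP_eq hH hσs hσ']

end Macro

end MacroAgree

open MacroAgree

/-- **Step (b) in the proof of Theorem 1.**  Let `M` be a hierarchical MDP with
target states `T`, `σ̂ = ⊔_𝕀 σ_i` the union of fixed locally optimal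
subpolicies, `macro(M)` the macro-MDP built from the same policies `σ_i`, and
`σ'` any memoryless policy of `M[σ̂]`.  Then for every state `s` of `macro(M)`
(i.e. every trivial state and every entry state):
`Pr_{M[σ̂][σ']}(s → ◊T) = Pr_{macro(M)[σ']}(s → ◊T)` and
`ER_{M[σ̂][σ']}(s → ◊T) = ER_{macro(M)[σ']}(s → ◊T)`. -/
theorem macro_values_agree
    {S A ι : Type} {Y : ℕ} [Fintype S] [Fintype A] [Fintype ι]
    (H : HMDP S A ι Y) (hM : H.toMDP.IsMDP) (hH : H.IsHMDP)
    (hT : ∀ σ, H.toMDP.IsPolicy σ → ∀ s, H.toMDP.PrR σ H.target s = 1)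
    (hTsub : ∀ i σ, (H.subMDP i).IsPolicy σ → ∀ s, (H.subMDP i).PrR σ {none} s = 1)
    (σs : ι → Option S → Option A) (hσs : H.LocallyOptimal σs)
    (σ' : S → A) (hσ' : (H.toMDP.restrict (H.liftPolicy σs)).IsPolicy σ')
    (s : S) (hs : ∀ i, s ∈ H.part i → s = H.entry i) :
    (H.toMDP.restrict (H.liftPolicy σs)).PrR σ' H.target s =
        (H.macroMDP σs).PrR σ' H.target s ∧
      (H.toMDP.restrict (H.liftPolicy σs)).ER σ' s = (H.macroMDP σs).ER σ' s := by
  have hstep := stepOf_restrict hH hσs hσ'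
  have hpol : H.toMDP.IsPolicy σ' := by
    intro u
    have h := hσ' u
    have h2 := fun t => congrFun (congrFun hstep u) t
    simp only [MDP.stepOf] at h2
    simpa only [h2] using h
  set q := H.toMDP.stepOf σ' with hq
  have hnn : ∀ u t, 0 ≤ q u t := fun u t => hM.1 u (σ' u) t
  have hone : ∀ u, ∑ t, q u t = 1 := fun u => (hM.2.1 u (σ' u)).resolve_left (hpol u)
  have hreach : ∀ u, MDP.reach q H.target u = 1 := hT σ' hpol
  have hd : Decays (kill q H.target) := decays_of_reach hnn hone hreach
  have hdsub : ∀ i, Decays (kill (sub q (H.part i)) {none}) := fun i => by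
    refine decays_of_reach (sub_nonneg' hnn) (sub_sum_one hone) fun x => ?_
    rw [← hTsub i (σs i) (hσs i).1 x, MDP.PrR, stepOf_subMDP hH hσs hσ']
  have htriv : ∀ {u}, u ∈ H.target → ¬ ∃ i, u ∈ H.part i := fun hu ⟨i, hi⟩ =>
    hH.2.2.2.2.2.2 i _ hi hu
  set p := (H.macroMDP σs).stepOf σ' with hp
  have hpnn : ∀ u t, 0 ≤ p u t := by
    intro u t
    by_cases h : ∃ i, u ∈ H.part i
    · simp only [hp, MDP.stepOf, HMDP.macroMDP, dif_pos h]
      refine Finset.sum_nonneg fun j _ => ?_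
      split_ifs
      · rw [resP_eq hH hσs hσ']
        exact tsum_nonneg fun n => hitAt_nonneg (sub_nonneg' hnn) _ _ _
      · exact le_rfl
    · rw [hp, macro_trivial h]
      exact hnn u t
  -- The expected number of steps to the target in `M` is a Lyapunov function for the macro chain.
  have hdp : Decays (kill p H.target) := by
    obtain ⟨v, hv⟩ := hd.exists_sol 1
    have hv0 := hd.sol_nonneg (kill_mono hnn _) (fun _ => zero_le_one) hv
    have hvs : ∀ u ∉ H.target, v u = 1 + ∑ t, q u t * v t := fun u hu => by
      have h := congrFun hv u
      rwa [Pi.add_apply, kill_apply, if_neg hu] at h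
    refine decays_of_lyapunov (kill_mono hpnn _) (v := fun u => v (rep H u))
      (fun u => hv0 (rep H u)) fun u => ?_
    simp only [Pi.add_apply, Pi.one_apply]
    rw [kill_apply]
    split_ifs with hu
    · rw [rep_of_trivial (htriv hu), hv, Pi.add_apply, kill_apply, if_pos hu]
      exact le_rfl
    by_cases h : ∃ i, u ∈ H.part i
    · obtain ⟨i, hi⟩ := h
      obtain ⟨e, he, he0, -⟩ := exists_localValue hnn (hdsub i) (ρ := fun _ => 1)
        (fun _ => zero_le_one)
      rw [macro_eq_mem hH hσs hσ' hnn hone (hdsub i) he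
        (fun u hu => hvs u (hH.2.2.2.2.2.2 i u hu)) hi]
      have he1 : 1 ≤ e (H.entry i) := by
        rw [he.2 _ (hH.2.2.1 i)]
        exact le_add_of_nonneg_right (Finset.sum_nonneg fun t _ => mul_nonneg (hnn _ _) (he0 t))
      exact add_le_add_left he1 _
    · rw [macro_eq_trivial hH h, rep_of_trivial h, hvs u hu]
  constructor
  · have h1 : MDP.reach p H.target = 1 := by
      refine reach_eq_of_sol hpnn hdp ?_
      funext u
      rw [Pi.add_apply, kill_apply]
      by_cases hu : u ∈ H.target
      · simp [hu]
      rw [if_neg hu, if_neg hu, zero_add]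
      by_cases h : ∃ i, u ∈ H.part i
      · obtain ⟨i, hi⟩ := h
        have := macro_eq_mem hH hσs hσ' hnn hone (hdsub i) (ρ := 0) (e := 0) (f := 1)
          ⟨fun _ _ => rfl, fun _ _ => by simp⟩ (fun u _ => by simp [← hq, hone]) hi
        simpa using this
      · have := macro_eq_trivial (σs := σs) (σ' := σ') hH h 1
        simp only [Pi.one_apply, mul_one, ← hq, hone] at this
        simpa using this.symm
    rw [MDP.PrR, hstep, hreach]
    exact (congrFun h1 s).symm
  · obtain ⟨x, hx⟩ := hd.exists_sol (fun u => if u ∈ H.target then 0 else H.r u)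
    have hxs : ∀ u ∉ H.target, x u = H.r u + ∑ t, q u t * x t := fun u hu => by
      have h := congrFun hx u
      rwa [Pi.add_apply, kill_apply, if_neg hu, if_neg hu] at h
    choose e he he0 hER using fun i => exists_localValue hnn (hdsub i) hM.2.2
    have hres : ∀ i, H.resE i = e i (H.entry i) := fun i => by
      rw [HMDP.resE, ← (hσs i).2, MDP.ER, stepOf_subMDP hH hσs hσ', ← hER]
      congr 1
    have hmr : ∀ u, 0 ≤ (H.macroMDP σs).r u := by
      intro u
      simp only [HMDP.macroMDP]
      split_ifs with h
      · rw [hres]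
        exact he0 _ _
      · exact hM.2.2 u
    have hX : MDP.expRew p (H.macroMDP σs).r H.target = fun u => x (rep H u) := by
      refine expRew_eq_of_sol hpnn hmr hdp ?_
      funext u
      rw [Pi.add_apply, kill_apply]
      by_cases hu : u ∈ H.target
      · rw [if_pos hu, if_pos hu, rep_of_trivial (htriv hu), hx, Pi.add_apply, kill_apply,
          if_pos hu, if_pos hu]
      rw [if_neg hu, if_neg hu]
      by_cases h : ∃ i, u ∈ H.part i
      · have hr : (H.macroMDP σs).r u = H.resE h.choose := by
          simp only [HMDP.macroMDP, dif_pos h]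
        rw [hr, hres]
        exact macro_eq_mem hH hσs hσ' hnn hone (hdsub _) (he _)
          (fun u hu => hxs u (hH.2.2.2.2.2.2 _ u hu)) h.choose_spec
      · have hr : (H.macroMDP σs).r u = H.r u := by
          simp only [HMDP.macroMDP, dif_neg h]
        rw [hr, macro_eq_trivial hH h, rep_of_trivial h, hxs u hu]
    rw [MDP.ER, hstep]
    change MDP.expRew q H.r H.target s = MDP.expRew p (H.macroMDP σs).r H.target s
    rw [hX, expRew_eq_of_sol hnn hM.2.2 hd hx]
    exact congrArg x (rep_eq_self hH hs).symm
end

section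
/- (Step (c) in the proof of Theorem 1.) Let M be a hierarchical MDP, σ̂ = ⊔_𝕀 σ_i the union of fixed locally optimal subpolicies, and macro(M) the macro-MDP built from the same policies σ_i. If σ' is an optimal memoryless policy of M[σ̂] and for every state s of macro(M) the expected rewards coincide, ER_{M[σ̂][σ']}(s → ◊T) = ER_{macro(M)[σ']}(s → ◊T), then σ' is also optimal for macro(M), i.e., ER_{macro(M)[σ']}(◊T) = maxER_{macro(M)}(◊T). -/
/-!
Every memoryless policy `σ` of the macro-MDP yields a policy of `M[σ̂]`: keep `σ` on trivial
states and use the only enabled action (the one of `σ'`) inside the partitions.  The macro value of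
`σ` is at most the value of this combined policy, so by optimality of `σ'` in `M[σ̂]` and by the
coincidence hypothesis at the initial state it is at most the macro value of `σ'`.  Since `σ'` is
itself a policy of the macro-MDP, it attains the supremum.

The inequality is a verification argument.  Almost sure reachability of the target makes the
value `V` of the combined policy finite (`erN_le_of_reach_eq_one`), so `V` solves its Bellman
equation (`expRew_bellman`).  Unfolding that equation along a run inside one partition gives
`V (entry i) ≥ resE i + ∑ j, resP i j * W (suc i j)` (`resE_add_le`), where `W` is `V` with all
states of a partition identified with its entry state.  Hence `W` dominates all finite-horizon
macro values (`macro_erN_le`).  That `σ'` is a policy of the macro-MDP amounts to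
`∑ j, resP i j = 1` (`sum_resP`): leaving a partition means passing through exactly one of its
successor states, one step before reaching `⊥`.
-/

open scoped BigOperators
open scoped Classical

/-! ### Finite Markov chains -/

namespace MDP

section Chain

variable {S : Type} [Fintype S] {Q : S → S → ℝ} {rew : S → ℝ} {T : Set S}

lemma hitAt_nonneg (hQ : ∀ s t, 0 ≤ Q s t) (n : ℕ) (s : S) : 0 ≤ hitAt Q T n s := by
  induction n generalizing s with
  | zero => simp only [hitAt]; split_ifs <;> norm_num
  | succ n ih =>
    simp only [hitAt]
    split_ifs
    · exact le_rfl
    · exact Finset.sum_nonneg fun t _ => mul_nonneg (hQ s t) (ih t)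

/-- First-step decomposition of the probability of hitting `T` before time `n + 1`. -/
lemma sum_hitAt_succ (n : ℕ) (s : S) :
    ∑ k ∈ Finset.range (n + 1), hitAt Q T k s =
      if s ∈ T then 1 else ∑ t, Q s t * ∑ k ∈ Finset.range n, hitAt Q T k t := by
  rw [Finset.sum_range_succ']
  split_ifs with h
  · simp [hitAt, h]
  · simp only [hitAt, h, if_false, add_zero]
    rw [Finset.sum_comm]
    exact Finset.sum_congr rfl fun t _ => (Finset.mul_sum _ _ _).symm

lemma sum_hitAt_le_one (hQ : ∀ s t, 0 ≤ Q s t) (hQ1 : ∀ s, ∑ t, Q s t ≤ 1) (n : ℕ) (s : S) :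
    ∑ k ∈ Finset.range n, hitAt Q T k s ≤ 1 := by
  induction n generalizing s with
  | zero => simp
  | succ n ih =>
    rw [sum_hitAt_succ]
    split_ifs
    · exact le_rfl
    · calc ∑ t, Q s t * ∑ k ∈ Finset.range n, hitAt Q T k t ≤ ∑ t, Q s t * 1 :=
            Finset.sum_le_sum fun t _ => mul_le_mul_of_nonneg_left (ih t) (hQ s t)
        _ ≤ 1 := by simpa using hQ1 s

lemma summable_hitAt (hQ : ∀ s t, 0 ≤ Q s t) (hQ1 : ∀ s, ∑ t, Q s t ≤ 1) (s : S) :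
    Summable fun n => hitAt Q T n s :=
  summable_of_sum_range_le (fun n => hitAt_nonneg hQ n s) fun n => sum_hitAt_le_one hQ hQ1 n s

lemma reach_nonneg (hQ : ∀ s t, 0 ≤ Q s t) (s : S) : 0 ≤ reach Q T s :=
  tsum_nonneg fun n => hitAt_nonneg hQ n s

lemma erN_nonneg (hQ : ∀ s t, 0 ≤ Q s t) (hr : ∀ s, 0 ≤ rew s) (n : ℕ) (s : S) :
    0 ≤ erN Q rew T n s := by
  induction n generalizing s with
  | zero => simp [erN]
  | succ n ih =>
    simp only [erN]
    split_ifs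
    · exact le_rfl
    · exact add_nonneg (hr s) (Finset.sum_nonneg fun t _ => mul_nonneg (hQ s t) (ih t))

lemma erN_mono (hQ : ∀ s t, 0 ≤ Q s t) (hr : ∀ s, 0 ≤ rew s) (s : S) :
    Monotone fun n => erN Q rew T n s := by
  refine monotone_nat_of_le_succ fun n => ?_
  induction n generalizing s with
  | zero => exact erN_nonneg hQ hr 1 s
  | succ n ih =>
    rw [erN, erN]
    split_ifs
    · exact le_rfl
    · exact add_le_add le_rfl
        (Finset.sum_le_sum fun t _ => mul_le_mul_of_nonneg_left (ih t) (hQ s t))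

/-- Splitting a run of length `n + m` after `m` steps: the remaining reward is collected only if
the target was not hit before time `m`. -/
lemma erN_add_le (hQ : ∀ s t, 0 ≤ Q s t) (hQ1 : ∀ s, ∑ t, Q s t = 1) {n : ℕ} {B : ℝ}
    (hB : ∀ s, erN Q rew T n s ≤ B) (m : ℕ) (s : S) :
    erN Q rew T (n + m) s ≤
      erN Q rew T m s + (1 - ∑ k ∈ Finset.range m, hitAt Q T k s) * B := by
  induction m generalizing s with
  | zero => simpa [erN] using hB s
  | succ m ih =>
    rw [sum_hitAt_succ, ← add_assoc, erN, erN]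
    split_ifs
    · simp
    · have h := Finset.sum_le_sum fun t (_ : t ∈ Finset.univ) =>
        mul_le_mul_of_nonneg_left (ih t) (hQ s t)
      have e : ∑ t, Q s t * (erN Q rew T m t
            + (1 - ∑ k ∈ Finset.range m, hitAt Q T k t) * B) =
          ∑ t, Q s t * erN Q rew T m t
            + (1 - ∑ t, Q s t * ∑ k ∈ Finset.range m, hitAt Q T k t) * B := by
        simp only [mul_add, Finset.sum_add_distrib, ← mul_assoc, mul_sub, mul_one, ← Finset.sum_mul,
          Finset.sum_sub_distrib, hQ1 s]
      linarith

/-- If the target is reached almost surely from every state, the expected rewards are finite: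
within some uniform horizon `N` the target is hit with probability at least `1/2`, so the total
reward is at most twice the largest reward collected in `N` steps. -/
lemma erN_le_of_reach_eq_one (hQ : ∀ s t, 0 ≤ Q s t) (hQ1 : ∀ s, ∑ t, Q s t = 1)
    (hr : ∀ s, 0 ≤ rew s) (hreach : ∀ s, reach Q T s = 1) :
    ∃ C, ∀ n s, erN Q rew T n s ≤ C := by
  have hev : ∀ s, ∀ᶠ n in Filter.atTop, 1 / 2 < ∑ k ∈ Finset.range n, hitAt Q T k s := by
    intro s
    have h := (summable_hitAt (T := T) hQ (fun s => (hQ1 s).le) s).hasSum.tendsto_sum_nat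
    rw [show ∑' n, hitAt Q T n s = 1 from hreach s] at h
    exact h.eventually (lt_mem_nhds (by norm_num))
  obtain ⟨N, hN, hN1⟩ :=
    ((Filter.eventually_all.2 hev).and (Filter.eventually_ge_atTop 1)).exists
  set K := ∑ s, erN Q rew T N s with hK
  have hK0 : 0 ≤ K := Finset.sum_nonneg fun s _ => erN_nonneg hQ hr N s
  have hNK : ∀ s, erN Q rew T N s ≤ K := fun s =>
    Finset.single_le_sum (fun t _ => erN_nonneg hQ hr N t) (Finset.mem_univ s)
  refine ⟨2 * K, fun n => ?_⟩
  induction n with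
  | zero => intro s; simp only [erN]; linarith
  | succ n ih =>
    intro s
    have h1 := erN_mono (T := T) hQ hr s (show n + 1 ≤ n + N by omega)
    have h2 := erN_add_le hQ hQ1 ih N s
    have h3 := mul_le_mul_of_nonneg_right
      (show 1 - ∑ k ∈ Finset.range N, hitAt Q T k s ≤ 1 / 2 by linarith [hN s])
      (show 0 ≤ 2 * K by linarith)
    simp only at h1
    linarith [hNK s]

lemma tendsto_erN (hQ : ∀ s t, 0 ≤ Q s t) (hr : ∀ s, 0 ≤ rew s)
    {C : ℝ} (s : S) (hC : ∀ n, erN Q rew T n s ≤ C) :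
    Filter.Tendsto (fun n => erN Q rew T n s) Filter.atTop (nhds (expRew Q rew T s)) :=
  tendsto_atTop_ciSup (erN_mono hQ hr s) ⟨C, by rintro _ ⟨n, rfl⟩; exact hC n⟩

lemma expRew_bellman (hQ : ∀ s t, 0 ≤ Q s t) (hr : ∀ s, 0 ≤ rew s)
    {C : ℝ} (hC : ∀ n s, erN Q rew T n s ≤ C) (s : S) (hs : s ∉ T) :
    expRew Q rew T s = rew s + ∑ t, Q s t * expRew Q rew T t := by
  have h1 := (Filter.tendsto_add_atTop_iff_nat 1).2
    (tendsto_erN hQ hr s fun n => hC n s)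
  refine tendsto_nhds_unique h1 ?_
  simp only [erN, hs, if_false]
  exact tendsto_const_nhds.add (tendsto_finsetSum _ fun t _ =>
    (tendsto_erN hQ hr t fun n => hC n t).const_mul _)

lemma expRew_nonneg (hQ : ∀ s t, 0 ≤ Q s t) (hr : ∀ s, 0 ≤ rew s) (s : S) :
    0 ≤ expRew Q rew T s :=
  Real.iSup_nonneg fun n => erN_nonneg hQ hr n s

end Chain

end MDP

/-! ### The chain inside one partition -/

namespace HMDP

open MDP

variable {S A ι : Type} {Y : ℕ} [Fintype S] [Fintype A] [Fintype ι]
  {H : HMDP S A ι Y} {i : ι} {ρ : Option S → Option A}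

lemma sub_none (hρ : (H.subMDP i).IsPolicy ρ) :
    (∀ t, (H.subMDP i).stepOf ρ none (some t) = 0) ∧
      (H.subMDP i).stepOf ρ none none = 1 := by
  have h := hρ none
  cases hb : ρ none <;> simp_all [subMDP, stepOf, Fintype.sum_option]

lemma sub_out (hρ : (H.subMDP i).IsPolicy ρ) {s : S} (hs : s ∉ H.part i) :
    (∀ t, (H.subMDP i).stepOf ρ (some s) (some t) = 0) ∧
      (H.subMDP i).stepOf ρ (some s) none = 1 := by
  have h := hρ (some s)
  cases hb : ρ (some s) <;> simp_all [subMDP, stepOf, Fintype.sum_option]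

lemma sub_in (hρ : (H.subMDP i).IsPolicy ρ) {s : S} (hs : s ∈ H.part i) :
    ∃ b, ρ (some s) = some b ∧ (∑ t, H.P s b t) ≠ 0 ∧
      (∀ t, (H.subMDP i).stepOf ρ (some s) (some t) = H.P s b t) ∧
      (H.subMDP i).stepOf ρ (some s) none = 0 := by
  have h := hρ (some s)
  cases hb : ρ (some s) <;> simp_all [subMDP, stepOf, Fintype.sum_option]

lemma sub_nonneg (hM : H.toMDP.IsMDP) (hρ : (H.subMDP i).IsPolicy ρ) (x y : Option S) :
    0 ≤ (H.subMDP i).stepOf ρ x y := by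
  obtain ⟨h1, h2⟩ := sub_none hρ
  rcases x with _ | s
  · rcases y with _ | t
    · rw [h2]; exact zero_le_one
    · rw [h1]
  · by_cases hs : s ∈ H.part i
    · obtain ⟨b, -, -, h3, h4⟩ := sub_in hρ hs
      rcases y with _ | t
      · rw [h4]
      · rw [h3]; exact hM.1 _ _ _
    · obtain ⟨h3, h4⟩ := sub_out hρ hs
      rcases y with _ | t
      · rw [h4]; exact zero_le_one
      · rw [h3]

lemma sub_row (hM : H.toMDP.IsMDP) (hρ : (H.subMDP i).IsPolicy ρ) (x : Option S) :
    ∑ y, (H.subMDP i).stepOf ρ x y = 1 := by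
  obtain ⟨h1, h2⟩ := sub_none hρ
  rw [Fintype.sum_option]
  rcases x with _ | s
  · simp [h1, h2]
  · by_cases hs : s ∈ H.part i
    · obtain ⟨b, -, h5, h3, h4⟩ := sub_in hρ hs
      simp only [h3, h4, zero_add]
      exact (hM.2.1 s b).resolve_left h5
    · obtain ⟨h3, h4⟩ := sub_out hρ hs
      simp [h3, h4]

lemma sub_rew_nonneg (hM : H.toMDP.IsMDP) (x : Option S) : 0 ≤ (H.subMDP i).r x := by
  rcases x with _ | s
  · simp [subMDP]
  · simp only [subMDP]
    split_ifs
    · exact hM.2.2 s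
    · exact le_rfl

/-- The bottom state is absorbing, so no proper state is hit from it. -/
lemma sub_hit_none (hρ : (H.subMDP i).IsPolicy ρ) (u : S) (k : ℕ) :
    hitAt ((H.subMDP i).stepOf ρ) {some u} k none = 0 := by
  obtain ⟨h1, -⟩ := sub_none hρ
  induction k with
  | zero => simp [hitAt]
  | succ k ih => simp [hitAt, Fintype.sum_option, h1, ih]

/-- From a state outside the partition, another state can only be hit at time `0`. -/
lemma sub_hit_out (hρ : (H.subMDP i).IsPolicy ρ) (u : S) {s : S} (hs : s ∉ H.part i) (k : ℕ) :
    hitAt ((H.subMDP i).stepOf ρ) {some u} (k + 1) (some s) = 0 := by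
  obtain ⟨h1, -⟩ := sub_out hρ hs
  simp [hitAt, Fintype.sum_option, h1, sub_hit_none hρ]

lemma sub_hit_in (hρ : (H.subMDP i).IsPolicy ρ) {u s : S} (hs : s ∈ H.part i)
    (hu : u ∉ H.part i) {b : A} (hb : ρ (some s) = some b) (k : ℕ) :
    hitAt ((H.subMDP i).stepOf ρ) {some u} (k + 1) (some s) =
      ∑ t, H.P s b t * hitAt ((H.subMDP i).stepOf ρ) {some u} k (some t) := by
  obtain ⟨b', hb', -, h3, h4⟩ := sub_in hρ hs
  obtain rfl : b' = b := by simpa [hb] using hb'.symm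
  have : s ≠ u := by rintro rfl; exact hu hs
  simp [hitAt, Fintype.sum_option, h3, h4, this]

/-- The bottom state is reached exactly one step after the (unique) successor state through which
the partition is left. -/
lemma sub_hit_bot (hH : H.IsHMDP) (hρ : (H.subMDP i).IsPolicy ρ) (k : ℕ) (s : S)
    (hs : s ∈ H.part i ∨ ∃ j, H.suc i j = s) :
    hitAt ((H.subMDP i).stepOf ρ) {none} (k + 1) (some s) =
      ∑ j, hitAt ((H.subMDP i).stepOf ρ) {some (H.suc i j)} k (some s) := by
  obtain ⟨-, -, -, -, -, hsuc, -⟩ := hH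
  obtain ⟨hinj, hout, hcov⟩ := hsuc i
  obtain ⟨n1, n2⟩ := sub_none hρ
  induction k generalizing s with
  | zero =>
    rcases hs with hs | ⟨j, rfl⟩
    · obtain ⟨b, hb, -, h3, h4⟩ := sub_in hρ hs
      have : ∀ j, s ≠ H.suc i j := fun j h => hout j (h ▸ hs)
      simp [hitAt, h4, this]
    · obtain ⟨h3, h4⟩ := sub_out hρ (hout j)
      simp [hitAt, h4, hinj.eq_iff]
  | succ k ih =>
    rcases hs with hs | ⟨j, rfl⟩
    · obtain ⟨b, hb, -, h3, h4⟩ := sub_in hρ hs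
      simp only [fun j => sub_hit_in hρ hs (hout j) hb k]
      rw [hitAt, if_neg (by simp), Fintype.sum_option, h4, zero_mul, zero_add, Finset.sum_comm]
      refine Finset.sum_congr rfl fun t _ => ?_
      rw [h3, ← Finset.mul_sum]
      by_cases hP : H.P s b t = 0
      · simp [hP]
      · rw [ih t]
        by_cases ht : t ∈ H.part i
        · exact Or.inl ht
        · exact Or.inr (hcov t ⟨ht, s, hs, b, hP⟩)
    · obtain ⟨h3, h4⟩ := sub_out hρ (hout j)
      simp only [fun j' => sub_hit_out hρ (H.suc i j') (hout j) k, Finset.sum_const_zero]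
      simp [hitAt, Fintype.sum_option, h3]

lemma sum_resP (hM : H.toMDP.IsMDP) (hH : H.IsHMDP) {σs : ι → Option S → Option A}
    (hρ : (H.subMDP i).IsPolicy (σs i))
    (h1 : (H.subMDP i).PrR (σs i) {none} (some (H.entry i)) = 1) :
    ∑ j, H.resP σs i j = 1 := by
  have hn := fun x y => sub_nonneg hM hρ x y
  have hr := fun x => (sub_row hM hρ x).le
  simp only [resP, PrR, reach]
  rw [← Summable.tsum_finsetSum (fun j _ => summable_hitAt hn hr _)]
  simp only [← sub_hit_bot hH hρ _ _ (Or.inl (hH.2.2.1 i))]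
  rw [PrR, reach, (summable_hitAt hn hr _).tsum_eq_zero_add] at h1
  simpa [hitAt] using h1

/-! ### Comparing the macro-MDP with a flat policy -/

/-- The function `V` with every state of a partition identified with the entry state of that
partition. -/
noncomputable def collapse (H : HMDP S A ι Y) (V : S → ℝ) : S → ℝ :=
  fun s => if h : ∃ i, s ∈ H.part i then V (H.entry h.choose) else V s

lemma collapse_nonneg {V : S → ℝ} (hV : ∀ s, 0 ≤ V s) (s : S) : 0 ≤ H.collapse V s := by
  unfold collapse; split_ifs
  · exact hV _
  · exact hV _

/-- A transition that changes the partition ends in a trivial state or an entry state. -/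
lemma collapse_eq (hH : H.IsHMDP) (V : S → ℝ) {s t : S} {a : A} (hP : H.P s a t ≠ 0)
    (hst : ∀ c, t ∈ H.part c → s ∉ H.part c) : H.collapse V t = V t := by
  obtain ⟨-, -, -, -, hent, -, -⟩ := hH
  unfold collapse
  split_ifs with h
  · by_contra hne
    exact hst _ h.choose_spec ((hent _ t h.choose_spec fun e => hne (by rw [← e])).2 s a hP)
  · rfl

/-- Unfolding the Bellman inequality of `V` along `n` steps inside partition `i`. -/
lemma sub_unfold (hM : H.toMDP.IsMDP) (hH : H.IsHMDP) (hρ : (H.subMDP i).IsPolicy ρ)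
    {V : S → ℝ} (hV0 : ∀ s, 0 ≤ V s)
    (hV : ∀ s ∈ H.part i, ∀ b, ρ (some s) = some b → H.r s + ∑ t, H.P s b t * V t ≤ V s)
    (n : ℕ) (s : S) :
    erN ((H.subMDP i).stepOf ρ) (H.subMDP i).r (H.subMDP i).target n (some s) +
      ∑ j, (∑ k ∈ Finset.range n,
        hitAt ((H.subMDP i).stepOf ρ) {some (H.suc i j)} k (some s)) *
          H.collapse V (H.suc i j) ≤
      if s ∈ H.part i then V s else H.collapse V s := by
  have hdisj := hH.1
  obtain ⟨hinj, hout, hcov⟩ := hH.2.2.2.2.2.1 i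
  have hW := collapse_nonneg (H := H) hV0
  have hbot : ∀ n, erN ((H.subMDP i).stepOf ρ) (H.subMDP i).r (H.subMDP i).target n none = 0 := by
    intro n; cases n <;> simp [erN, subMDP]
  induction n generalizing s with
  | zero =>
    simp only [erN, Finset.range_zero, Finset.sum_empty, zero_mul, Finset.sum_const_zero, add_zero]
    split_ifs
    · exact hV0 s
    · exact hW s
  | succ n ih =>
    by_cases hs : s ∈ H.part i
    · rw [if_pos hs]
      obtain ⟨b, hb, -, h3, h4⟩ := sub_in hρ hs
      refine le_trans (le_of_eq ?_) (le_trans (add_le_add (le_refl (H.r s))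
        (Finset.sum_le_sum fun t (_ : t ∈ Finset.univ) =>
          mul_le_mul_of_nonneg_left (ih t) (hM.1 s b t))) ?_)
      · have hne : ∀ j, s ≠ H.suc i j := fun j h => hout j (h ▸ hs)
        simp only [sum_hitAt_succ, Set.mem_singleton_iff, Option.some.injEq, hne, if_false,
          Fintype.sum_option, h4, h3, zero_mul, zero_add]
        rw [erN, if_neg (by simp [subMDP]), Fintype.sum_option, h4, zero_mul, zero_add]
        simp only [h3, mul_add, Finset.sum_add_distrib, Finset.mul_sum, Finset.sum_mul]
        have hr : (H.subMDP i).r (some s) = H.r s := by simp [subMDP, hs]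
        rw [hr, add_assoc]
        congr 2
        rw [Finset.sum_comm]
        refine Finset.sum_congr rfl fun t _ => Finset.sum_congr rfl fun j _ =>
          Finset.sum_congr rfl fun k _ => by ring
      · refine le_trans (le_of_eq ?_) (hV s hs b hb)
        congr 1
        refine Finset.sum_congr rfl fun t _ => ?_
        by_cases hP : H.P s b t = 0
        · simp [hP]
        · split_ifs with ht
          · rfl
          · rw [collapse_eq hH V hP]
            intro c htc hsc
            by_cases hci : c = i
            · exact ht (hci ▸ htc)
            · exact Finset.disjoint_left.1 (hdisj c i hci) hsc hs
    · rw [if_neg hs]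
      obtain ⟨h3, h4⟩ := sub_out hρ hs
      have hr : (H.subMDP i).r (some s) = 0 := by simp [subMDP, hs]
      have he : erN ((H.subMDP i).stepOf ρ) (H.subMDP i).r (H.subMDP i).target (n + 1) (some s)
          = 0 := by
        rw [erN, Fintype.sum_option]
        simp [hr, h3, hbot]
      rw [he, zero_add]
      simp only [Finset.sum_range_succ', sub_hit_out hρ _ hs, Finset.sum_const_zero, zero_add]
      by_cases hj : ∃ j, H.suc i j = s
      · obtain ⟨j, rfl⟩ := hj
        simp [hitAt, hinj.eq_iff]
      · push Not at hj
        have hj' : ∀ j, s ≠ H.suc i j := fun j h => hj j h.symm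
        simpa [hitAt, hj'] using hW s

/-- The Bellman inequality of the macro-MDP at the entry state of partition `i`. -/
lemma resE_add_le (hM : H.toMDP.IsMDP) (hH : H.IsHMDP) {σs : ι → Option S → Option A}
    (hσs : H.LocallyOptimal σs) {V : S → ℝ} (hV0 : ∀ s, 0 ≤ V s)
    (hV : ∀ s ∈ H.part i, ∀ b, σs i (some s) = some b → H.r s + ∑ t, H.P s b t * V t ≤ V s) :
    H.resE i + ∑ j, H.resP σs i j * H.collapse V (H.suc i j) ≤ V (H.entry i) := by
  obtain ⟨hρ, hopt⟩ := hσs i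
  have hn := fun x y => sub_nonneg hM hρ x y
  have hr := fun x => (sub_row hM hρ x).le
  have hF := fun n => (sub_unfold hM hH hρ hV0 hV n (H.entry i)).trans_eq
    (if_pos (hH.2.2.1 i))
  rw [resE, ← hopt]
  refine le_of_tendsto' (Filter.Tendsto.add (tendsto_erN hn (sub_rew_nonneg hM) _
    (C := V (H.entry i)) fun n => le_trans (le_add_of_nonneg_right ?_) (hF n))
    (tendsto_finsetSum _ fun j _ =>
      (summable_hitAt hn hr _).hasSum.tendsto_sum_nat.mul_const _)) hF
  exact Finset.sum_nonneg fun j _ => mul_nonneg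
    (Finset.sum_nonneg fun k _ => hitAt_nonneg hn k _) (collapse_nonneg hV0 _)

/-- A nonnegative supersolution `V` of the Bellman equation of a flat policy, namely `σs` inside
the partitions and `σ` on trivial states, dominates after collapsing the macro value of `σ`. -/
lemma macro_erN_le (hM : H.toMDP.IsMDP) (hH : H.IsHMDP) {σs : ι → Option S → Option A}
    (hσs : H.LocallyOptimal σs) {V : S → ℝ} (hV0 : ∀ s, 0 ≤ V s)
    (hVin : ∀ i, ∀ s ∈ H.part i, ∀ b, σs i (some s) = some b →
      H.r s + ∑ t, H.P s b t * V t ≤ V s)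
    (σ : S → A)
    (hVout : ∀ s, (¬ ∃ i, s ∈ H.part i) → s ∉ H.target →
      H.r s + ∑ t, H.P s (σ s) t * V t ≤ V s) (n : ℕ) (s : S) :
    erN ((H.macroMDP σs).stepOf σ) (H.macroMDP σs).r (H.macroMDP σs).target n s ≤
      H.collapse V s := by
  have hW := collapse_nonneg (H := H) hV0
  induction n generalizing s with
  | zero => exact hW s
  | succ n ih =>
    rw [erN]
    split_ifs with hsT
    · exact hW s
    · by_cases h : ∃ i, s ∈ H.part i
      · simp only [collapse, stepOf, macroMDP, h, dif_pos]
        refine le_trans (add_le_add le_rfl ?_) (resE_add_le hM hH hσs hV0 (hVin h.choose))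
        simp only [Finset.sum_mul]
        rw [Finset.sum_comm]
        refine Finset.sum_le_sum fun j _ => ?_
        simp only [ite_mul, zero_mul, Finset.sum_ite_eq', Finset.mem_univ, if_true]
        exact mul_le_mul_of_nonneg_left (ih _)
          (reach_nonneg (fun x y => sub_nonneg hM (hσs _).1 x y) _)
      · have hc : H.collapse V s = V s := by simp only [collapse, h, dif_neg, not_false_eq_true]
        rw [hc]
        refine le_trans ?_ (hVout s h hsT)
        have hr : (H.macroMDP σs).r s = H.r s := by simp only [macroMDP, h, dif_neg,
          not_false_eq_true]
        have hP : ∀ t, (H.macroMDP σs).stepOf σ s t = H.P s (σ s) t := fun t => by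
          simp only [stepOf, macroMDP, h, dif_neg, not_false_eq_true]
        rw [hr]
        refine add_le_add le_rfl (Finset.sum_le_sum fun t _ => ?_)
        rw [hP]
        by_cases hz : H.P s (σ s) t = 0
        · simp [hz]
        · rw [← collapse_eq hH V hz fun c _ hs => h ⟨c, hs⟩]
          exact mul_le_mul_of_nonneg_left (ih t) (hM.1 _ _ _)

lemma choose_eq (hH : H.IsHMDP) {s : S} (hs : s ∈ H.part i) (h : ∃ i, s ∈ H.part i) :
    h.choose = i := by
  by_contra hne
  exact Finset.disjoint_left.1 (hH.1 _ _ hne) h.choose_spec hs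

lemma liftPolicy_of_mem (hH : H.IsHMDP) (σs : ι → Option S → Option A) {s : S}
    (hs : s ∈ H.part i) : H.liftPolicy σs s = σs i (some s) := by
  have h : ∃ i, s ∈ H.part i := ⟨i, hs⟩
  rw [liftPolicy, dif_pos h, choose_eq hH hs h]

end HMDP

namespace MDP

variable {S A : Type} [Fintype S] [Fintype A] {M : MDP S A} {τ : S → Option A} {σ : S → A}

/-- A policy of `M[τ]` follows `τ` wherever `τ` is defined. -/
lemma IsPolicy.eq_of_restrict (h : (M.restrict τ).IsPolicy σ) {s : S} {b : A}
    (hb : τ s = some b) : σ s = b := by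
  by_contra hne
  exact h s (by simp [restrict, hb, hne])

lemma restrict_stepOf (h : ∀ s b, τ s = some b → σ s = b) :
    (M.restrict τ).stepOf σ = M.stepOf σ := by
  funext s t
  cases hb : τ s with
  | none => simp [stepOf, restrict, hb]
  | some b => simp [stepOf, restrict, hb, h s b hb]

end MDP

/-- **Step (c) in the proof of Theorem 1.**  Let `M` be a hierarchical MDP,
`σ̂ = ⊔_𝕀 σ_i` the union of fixed locally optimal subpolicies and `macro(M)`
the macro-MDP built from the same policies `σ_i`.  If `σ'` is an optimal
memoryless policy of `M[σ̂]` and for every state `s` of `macro(M)` the expected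
rewards coincide, `ER_{M[σ̂][σ']}(s → ◊T) = ER_{macro(M)[σ']}(s → ◊T)`, then
`σ'` is also optimal for `macro(M)`:
`ER_{macro(M)[σ']}(◊T) = maxER_{macro(M)}(◊T)`. -/
theorem optimal_policy_transfers_to_macro
    {S A ι : Type} {Y : ℕ} [Fintype S] [Fintype A] [Fintype ι]
    (H : HMDP S A ι Y) (hM : H.toMDP.IsMDP) (hH : H.IsHMDP)
    (hT : ∀ σ, H.toMDP.IsPolicy σ → ∀ s, H.toMDP.PrR σ H.target s = 1)
    (hTsub : ∀ i σ, (H.subMDP i).IsPolicy σ → ∀ s, (H.subMDP i).PrR σ {none} s = 1)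
    (σs : ι → Option S → Option A) (hσs : H.LocallyOptimal σs)
    (σ' : S → A) (hσ'pol : (H.toMDP.restrict (H.liftPolicy σs)).IsPolicy σ')
    (hσ'opt : (H.toMDP.restrict (H.liftPolicy σs)).ER σ' H.init =
      (H.toMDP.restrict (H.liftPolicy σs)).maxER H.init)
    (hcoincide : ∀ s, (∀ i, s ∈ H.part i → s = H.entry i) →
      (H.toMDP.restrict (H.liftPolicy σs)).ER σ' s = (H.macroMDP σs).ER σ' s) :
    (H.macroMDP σs).ER σ' H.init = (H.macroMDP σs).maxER H.init := by
  obtain ⟨-, -, -, -, hent, -, hntgt⟩ := id hH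
  have hstep' : (H.toMDP.restrict (H.liftPolicy σs)).stepOf σ' = H.toMDP.stepOf σ' :=
    MDP.restrict_stepOf fun s b hb => hσ'pol.eq_of_restrict hb
  have hinit : ∀ i, H.init ∈ H.part i → H.init = H.entry i := by
    intro i hi
    by_contra hne
    exact (hent i _ hi hne).1 rfl
  have hpol : (H.macroMDP σs).IsPolicy σ' := by
    intro s
    by_cases h : ∃ i, s ∈ H.part i
    · simp only [HMDP.macroMDP, h, dif_pos]
      rw [Finset.sum_comm]
      simp only [Finset.sum_ite_eq', Finset.mem_univ, if_true]
      rw [HMDP.sum_resP hM hH (hσs _).1 (hTsub _ _ (hσs _).1 _)]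
      exact one_ne_zero
    · simp only [HMDP.macroMDP, h, dif_neg, not_false_eq_true]
      have := hσ'pol s
      change ∑ t, (H.toMDP.restrict (H.liftPolicy σs)).stepOf σ' s t ≠ 0 at this
      rwa [hstep'] at this
  have key : ∀ σ, (H.macroMDP σs).IsPolicy σ →
      (H.macroMDP σs).ER σ H.init ≤ (H.macroMDP σs).ER σ' H.init := by
    intro σ hσ
    have hval := (hcoincide H.init hinit).symm.trans hσ'opt
    rw [hval]
    -- `σ` on trivial states, the prescribed local action (which `σ'` follows) elsewhere
    set π : S → A := fun s => if ∃ i, s ∈ H.part i then σ' s else σ s with hπ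
    have hπin : ∀ i, ∀ s ∈ H.part i, ∀ b, σs i (some s) = some b → π s = b := by
      intro i s hs b hb
      rw [hπ]
      simp only [if_pos (show ∃ i, s ∈ H.part i from ⟨i, hs⟩)]
      exact hσ'pol.eq_of_restrict (by rw [HMDP.liftPolicy_of_mem hH σs hs, hb])
    have hπout : ∀ s, (¬ ∃ i, s ∈ H.part i) → π s = σ s := fun s h => by
      rw [hπ]; simp only [if_neg h]
    have hstep : (H.toMDP.restrict (H.liftPolicy σs)).stepOf π = H.toMDP.stepOf π := by
      refine MDP.restrict_stepOf fun s b hb => ?_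
      by_cases h : ∃ i, s ∈ H.part i
      · obtain ⟨i, hi⟩ := h
        exact hπin i s hi b (by rw [← HMDP.liftPolicy_of_mem hH σs hi, hb])
      · simp [HMDP.liftPolicy, h] at hb
    have hπpol : H.toMDP.IsPolicy π := by
      intro s
      by_cases h : ∃ i, s ∈ H.part i
      · obtain ⟨i, hi⟩ := h
        obtain ⟨b, hb, hne, -⟩ := HMDP.sub_in (hσs i).1 hi
        rwa [hπin i s hi b hb]
      · rw [hπout s h]
        simpa only [HMDP.macroMDP, h, dif_neg, not_false_eq_true] using hσ s
    have hπR : (H.toMDP.restrict (H.liftPolicy σs)).IsPolicy π := by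
      intro s
      change ∑ t, (H.toMDP.restrict (H.liftPolicy σs)).stepOf π s t ≠ 0
      rw [hstep]
      exact hπpol s
    have hQ0 : ∀ s t, 0 ≤ H.toMDP.stepOf π s t := fun s t => hM.1 _ _ _
    have hQ1 : ∀ s, ∑ t, H.toMDP.stepOf π s t = 1 := fun s =>
      (hM.2.1 s (π s)).resolve_left (hπpol s)
    obtain ⟨C, hC⟩ := MDP.erN_le_of_reach_eq_one hQ0 hQ1 hM.2.2 (hT π hπpol)
    have hbell := MDP.expRew_bellman hQ0 hM.2.2 hC
    set V := MDP.expRew (H.toMDP.stepOf π) H.r H.target with hVdef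
    have hle : (H.macroMDP σs).ER σ H.init ≤ V H.init := by
      have hcol : H.collapse V H.init = V H.init := by
        unfold HMDP.collapse
        split_ifs with h
        · rw [← hinit _ h.choose_spec]
        · rfl
      rw [← hcol]
      refine ciSup_le fun n => HMDP.macro_erN_le hM hH hσs
        (MDP.expRew_nonneg hQ0 hM.2.2) ?_ σ ?_ n _
      · intro i s hs b hb
        refine le_of_eq ((hbell s (hntgt i s hs)).trans ?_).symm
        simp only [MDP.stepOf, hπin i s hs b hb]
        rfl
      · intro s hs hst
        refine le_of_eq ((hbell s hst).trans ?_).symm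
        simp only [MDP.stepOf, hπout s hs]
        rfl
    refine hle.trans ?_
    have hER : (H.toMDP.restrict (H.liftPolicy σs)).ER π H.init = V H.init := by
      rw [MDP.ER, hstep]; rfl
    rw [← hER]
    exact le_ciSup (f := fun σ : {σ // (H.toMDP.restrict (H.liftPolicy σs)).IsPolicy σ} =>
      (H.toMDP.restrict (H.liftPolicy σs)).ER σ.1 H.init) (Set.finite_range _).bddAbove ⟨π, hπR⟩
  have : Nonempty {σ // (H.macroMDP σs).IsPolicy σ} := ⟨⟨σ', hpol⟩⟩
  refine le_antisymm ?_ (ciSup_le fun σ => key σ.1 σ.2)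
  exact le_ciSup (f := fun σ : {σ // (H.macroMDP σs).IsPolicy σ} =>
    (H.macroMDP σs).ER σ.1 H.init) (Set.finite_range _).bddAbove ⟨σ', hpol⟩
end

section
/- (Exactness at the point region.) Let M be a hierarchical MDP with optimal local subpolicies and target states T, umacro(M) its uncertain macro-MDP, and u* the valuation with u*(p_{i,j}) = res_i(j) and u*(q_i) = res_i(Y). For the point region R = {u*}: min_{u ∈ R} maxER_{umacro(M)[u]}(◊T) = max_{u ∈ R} maxER_{umacro(M)[u]}(◊T) = maxER_M(◊T). Hence, once all subMDPs have been individually analysed exactly, the computed lower and upper bounds coincide with the value of M. -/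
/-!
For a singleton region the minimum and the maximum are both the value of the macro-MDP at `u*`,
and by optimality of local subpolicies the value of `M` is that of `M` restricted to the fixed
local policies. So the two MDPs, macro and restricted, have to be compared. Their policies
correspond to each other: both are free on trivial states only, because the exit probabilities
of a partition sum to one (`IsLocalSolution.sum_h_one`).

For corresponding policies the expected rewards agree because each is the unique solution of its
linear system. For a finite chain reaching its target almost surely, a minimum principle
(`nonneg_of_superharmonic`) gives uniqueness, hence existence by finite dimension, and
`expRew_eq` identifies a nonnegative solution with the supremum of truncated rewards. Inside a
partition, uniqueness for the subMDP chain yields the splitting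
`V s = E s + ∑ j, h j s * V (suc j)` (`IsLocalSolution.eq_add_sum`) of the value into the local
reward and the value at the exit. At an entry state this is exactly the macro equation, so the
value function of `M` solves the macro system. That system is uniquely solvable: a harmonic
function of the macro chain extends, by the exit probabilities, to a harmonic function of the
chain on `M`, which vanishes (`umacro_ER_eq`).
-/

open scoped BigOperators
open scoped Classical

/-- The parameters of the uncertain macro-MDP: `p i j` is the transition
probability from `entry i` to the `j`-th successor of partition `i`, and
`q i` is the reward collected in partition `i`. -/
inductive Param (ι : Type) (Y : ℕ) where
  | p : ι → Fin Y → Param ι Y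
  | q : ι → Param ι Y

/-- The (rectangular) region `[[lo, hi]]` of parameter valuations. -/
def region {ι : Type} {Y : ℕ} (lo hi : Param ι Y → ℝ) : Set (Param ι Y → ℝ) :=
  { u | lo ≤ u ∧ u ≤ hi }

/-- The parameter valuation induced by a family of vectors in `ℝ^{Y+1}`
(the first `Y` entries bound the `p`-parameters, the last one the `q`-parameter). -/
def toVal {ι : Type} {Y : ℕ} (b : ι → Fin (Y + 1) → ℝ) : Param ι Y → ℝ
  | .p i j => b i j.castSucc
  | .q i => b i (Fin.last Y)

namespace HMDP

variable {S A ι : Type} {Y : ℕ} [Fintype S] [Fintype A] [Fintype ι]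

/-- The instantiation `umacro(M)[u]` of the uncertain macro-MDP of `H` at the
parameter valuation `u`. -/
noncomputable def umacroInst (H : HMDP S A ι Y) (u : Param ι Y → ℝ) : MDP S A where
  init := H.init
  P := fun s a t =>
    if h : ∃ i, s ∈ H.part i then
      ∑ j, if t = H.suc h.choose j then u (.p h.choose j) else 0
    else H.P s a t
  r := fun s => if h : ∃ i, s ∈ H.part i then u (.q h.choose) else H.r s
  target := H.target

/-- The valuation `u*` with `u*(p_{i,j}) = res_i(j)` and `u*(q_i) = res_i(Y)`. -/
noncomputable def ustar (H : HMDP S A ι Y) (σs : ι → Option S → Option A) :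
    Param ι Y → ℝ
  | .p i j => H.resP σs i j
  | .q i => H.resE i

/-- A set of parameter valuations is suitable if it contains `u*`. -/
def Suitable (H : HMDP S A ι Y) (σs : ι → Option S → Option A)
    (R : Set (Param ι Y → ℝ)) : Prop :=
  H.ustar σs ∈ R

end HMDP

/-! ### Finite Markov chains -/

section Chain

variable {S : Type} [Fintype S]

/-- The Dirichlet problem for the kernel `K` with boundary `T` has only the trivial
solution: a function vanishing on `T` and harmonic off `T` is zero. -/
def DirichletUnique (K : S → S → ℝ) (T : Set S) : Prop :=
  ∀ D : S → ℝ, (∀ s ∈ T, D s = 0) → (∀ s ∉ T, D s = ∑ t, K s t * D t) → ∀ s, D s = 0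

/-- `W` solves the expected-reward equations for reaching `T`. -/
def IsBellman (K : S → S → ℝ) (rew : S → ℝ) (T : Set S) (W : S → ℝ) : Prop :=
  (∀ s ∈ T, W s = 0) ∧ ∀ s ∉ T, W s = rew s + ∑ t, K s t * W t

theorem hitAt_nonneg {K : S → S → ℝ} (hK : ∀ s t, 0 ≤ K s t) (T : Set S) (n : ℕ) (s : S) :
    0 ≤ MDP.hitAt K T n s := by
  induction n generalizing s with
  | zero => unfold MDP.hitAt; split_ifs <;> norm_num
  | succ n ih =>
    unfold MDP.hitAt
    split_ifs
    · exact le_rfl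
    · exact Finset.sum_nonneg fun t _ => mul_nonneg (hK s t) (ih t)

/-- The probability of not having hit `T` before time `n + 1`, one step further. -/
theorem survival_succ {K : S → S → ℝ} (hK1 : ∀ s, ∑ t, K s t = 1) (T : Set S) (n : ℕ) (s : S) :
    1 - ∑ k ∈ Finset.range (n + 1), MDP.hitAt K T k s =
      if s ∈ T then 0 else ∑ t, K s t * (1 - ∑ k ∈ Finset.range n, MDP.hitAt K T k t) := by
  rw [Finset.sum_range_succ']
  by_cases hs : s ∈ T
  · simp [MDP.hitAt, hs]
  · simp only [MDP.hitAt, hs, if_false, mul_sub, mul_one, Finset.sum_sub_distrib, hK1,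
      Finset.mul_sum, add_zero]
    rw [Finset.sum_comm]

theorem survival_nonneg {K : S → S → ℝ} (hK : ∀ s t, 0 ≤ K s t) (hK1 : ∀ s, ∑ t, K s t = 1)
    (T : Set S) (n : ℕ) (s : S) :
    0 ≤ 1 - ∑ k ∈ Finset.range n, MDP.hitAt K T k s := by
  induction n generalizing s with
  | zero => simp
  | succ n ih =>
    rw [survival_succ hK1]
    split_ifs
    · exact le_rfl
    · exact Finset.sum_nonneg fun t _ => mul_nonneg (hK s t) (ih t)

theorem summable_hitAt {K : S → S → ℝ} (hK : ∀ s t, 0 ≤ K s t) (hK1 : ∀ s, ∑ t, K s t = 1)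
    (T : Set S) (s : S) : Summable fun n => MDP.hitAt K T n s :=
  summable_of_sum_range_le (c := 1) (fun n => hitAt_nonneg hK T n s) fun n => by
    have := survival_nonneg hK hK1 T n s
    linarith

theorem reach_nonneg {K : S → S → ℝ} (hK : ∀ s t, 0 ≤ K s t) (T : Set S) (s : S) :
    0 ≤ MDP.reach K T s :=
  tsum_nonneg fun n => hitAt_nonneg hK T n s

theorem reach_of_mem {K : S → S → ℝ} {T : Set S} {s : S} (hs : s ∈ T) :
    MDP.reach K T s = 1 := by
  unfold MDP.reach
  rw [tsum_eq_single 0]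
  · simp [MDP.hitAt, hs]
  · intro n hn
    cases n with
    | zero => exact absurd rfl hn
    | succ n => simp [MDP.hitAt, hs]

theorem reach_of_notMem {K : S → S → ℝ} (hK : ∀ s t, 0 ≤ K s t) (hK1 : ∀ s, ∑ t, K s t = 1)
    {T : Set S} {s : S} (hs : s ∉ T) :
    MDP.reach K T s = ∑ t, K s t * MDP.reach K T t := by
  unfold MDP.reach
  rw [(summable_hitAt hK hK1 T s).tsum_eq_zero_add]
  simp only [MDP.hitAt, hs, if_false, zero_add]
  rw [Summable.tsum_finsetSum fun t _ => (summable_hitAt hK hK1 T t).mul_left _]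
  simp only [tsum_mul_left]

theorem reach_of_absorbing {K : S → S → ℝ} {T : Set S} {s : S} (hs : s ∉ T)
    (hK : ∀ t, t ≠ s → K s t = 0) : MDP.reach K T s = 0 := by
  have h : ∀ n, MDP.hitAt K T n s = 0 := by
    intro n
    induction n with
    | zero => simp [MDP.hitAt, hs]
    | succ n ih =>
      simp only [MDP.hitAt, hs, if_false]
      refine Finset.sum_eq_zero fun t _ => ?_
      by_cases hts : t = s
      · rw [hts, ih, mul_zero]
      · rw [hK t hts, zero_mul]
  simp [MDP.reach, h]

/-- Minimum principle: if `T` is reached almost surely, a superharmonic function that is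
nonnegative on `T` is nonnegative, since it is at least `-C` times the probability of
surviving for `n` steps, for every `n`. -/
theorem nonneg_of_superharmonic {K : S → S → ℝ} (hK : ∀ s t, 0 ≤ K s t)
    (hK1 : ∀ s, ∑ t, K s t = 1) {T : Set S} (hT : ∀ s, MDP.reach K T s = 1) {D : S → ℝ}
    (h0 : ∀ s ∈ T, 0 ≤ D s) (h1 : ∀ s ∉ T, ∑ t, K s t * D t ≤ D s) (s : S) : 0 ≤ D s := by
  set C : ℝ := ∑ t, |D t|
  have key : ∀ n s, -C * (1 - ∑ k ∈ Finset.range n, MDP.hitAt K T k s) ≤ D s := by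
    intro n
    induction n with
    | zero =>
      intro s
      have := Finset.single_le_sum (f := fun t => |D t|) (fun t _ => abs_nonneg _)
        (Finset.mem_univ s)
      have h2 := neg_abs_le (D s)
      simp only [Finset.range_zero, Finset.sum_empty, sub_zero, mul_one]
      linarith
    | succ n ih =>
      intro s
      rw [survival_succ hK1]
      split_ifs with hs
      · simpa using h0 s hs
      · refine le_trans ?_ (h1 s hs)
        rw [Finset.mul_sum]
        refine Finset.sum_le_sum fun t _ => ?_
        calc _ = K s t * (-C * (1 - ∑ k ∈ Finset.range n, MDP.hitAt K T k t)) := by ring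
          _ ≤ _ := mul_le_mul_of_nonneg_left (ih t) (hK s t)
  have hlim := (summable_hitAt hK hK1 T s).hasSum.tendsto_sum_nat
  have hs : ∑' n, MDP.hitAt K T n s = 1 := hT s
  rw [hs] at hlim
  have h2 := (hlim.const_sub 1).const_mul (-C)
  simp only [sub_self, mul_zero] at h2
  exact le_of_tendsto' h2 fun n => key n s

theorem dirichletUnique_of_reach {K : S → S → ℝ} (hK : ∀ s t, 0 ≤ K s t)
    (hK1 : ∀ s, ∑ t, K s t = 1) {T : Set S} (hT : ∀ s, MDP.reach K T s = 1) :
    DirichletUnique K T := by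
  intro D h0 h1 s
  have hpos := nonneg_of_superharmonic hK hK1 hT (fun s hs => (h0 s hs).ge)
    (fun s hs => (h1 s hs).ge) s
  have hneg := nonneg_of_superharmonic hK hK1 hT (D := fun s => -D s)
    (fun s hs => by simp [h0 s hs]) (fun s hs => by simp [h1 s hs]) s
  linarith

/-- By finite dimension, uniqueness for the Dirichlet problem gives existence. -/
theorem exists_isBellman {K : S → S → ℝ} {T : Set S} (hU : DirichletUnique K T) (rew : S → ℝ) :
    ∃ W, IsBellman K rew T W := by
  let L : (S → ℝ) →ₗ[ℝ] (S → ℝ) :=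
    { toFun := fun W s => if s ∈ T then W s else W s - ∑ t, K s t * W t
      map_add' := fun V W => by
        funext s
        simp only [Pi.add_apply, mul_add, Finset.sum_add_distrib]
        split_ifs <;> ring
      map_smul' := fun c W => by
        funext s
        simp only [Pi.smul_apply, smul_eq_mul, RingHom.id_apply, mul_sub, Finset.mul_sum,
          mul_ite]
        simp only [mul_left_comm] }
  have hinj : Function.Injective L := by
    rw [← LinearMap.ker_eq_bot, LinearMap.ker_eq_bot']
    intro D hD
    funext s
    refine hU D (fun s hs => ?_) (fun s hs => ?_) s
    · simpa [L, hs] using congrFun hD s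
    · have : D s - ∑ t, K s t * D t = 0 := by simpa [L, hs] using congrFun hD s
      linarith
  obtain ⟨W, hW⟩ := (LinearMap.injective_iff_surjective.mp hinj)
    (fun s => if s ∈ T then 0 else rew s)
  refine ⟨W, fun s hs => ?_, fun s hs => ?_⟩
  · simpa [L, hs] using congrFun hW s
  · have : W s - ∑ t, K s t * W t = rew s := by simpa [L, hs] using congrFun hW s
    linarith

/-- A nonnegative solution `W` of the expected-reward equations dominates the truncations, so
these increase to a solution, which is `W` by uniqueness. -/
theorem expRew_eq {K : S → S → ℝ} (hK : ∀ s t, 0 ≤ K s t) {rew : S → ℝ}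
    (hr : ∀ s, 0 ≤ rew s) {T : Set S} (hU : DirichletUnique K T) {W : S → ℝ}
    (hW0 : ∀ s, 0 ≤ W s) (hW : IsBellman K rew T W) (s : S) : MDP.expRew K rew T s = W s := by
  have hle : ∀ n s, MDP.erN K rew T n s ≤ W s := by
    intro n
    induction n with
    | zero => intro s; exact hW0 s
    | succ n ih =>
      intro s
      unfold MDP.erN
      split_ifs with hs
      · exact hW0 s
      · rw [hW.2 s hs]
        gcongr with t
        · exact hK s t
        · exact ih t
  have hmono : ∀ n s, MDP.erN K rew T n s ≤ MDP.erN K rew T (n + 1) s := by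
    intro n
    induction n with
    | zero =>
      intro s
      simp only [MDP.erN]
      split_ifs
      · exact le_rfl
      · simpa using hr s
    | succ n ih =>
      intro s
      rw [MDP.erN, MDP.erN]
      split_ifs with hs
      · exact le_rfl
      · gcongr with t
        · exact hK s t
        · exact ih t
  have hlim : ∀ s, Filter.Tendsto (fun n => MDP.erN K rew T n s) Filter.atTop
      (nhds (MDP.expRew K rew T s)) := fun s =>
    tendsto_atTop_ciSup (monotone_nat_of_le_succ fun n => hmono n s)
      ⟨W s, by rintro _ ⟨n, rfl⟩; exact hle n s⟩
  have h0 : ∀ s ∈ T, MDP.expRew K rew T s = 0 := by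
    intro s hs
    have : ∀ n, MDP.erN K rew T n s = 0 := fun n => by cases n <;> simp [MDP.erN, hs]
    simp [MDP.expRew, this]
  have h1 : ∀ s ∉ T, MDP.expRew K rew T s = rew s + ∑ t, K s t * MDP.expRew K rew T t := by
    intro s hs
    refine tendsto_nhds_unique ((hlim s).comp (Filter.tendsto_add_atTop_nat 1)) ?_
    have := (tendsto_finsetSum Finset.univ fun t _ => (hlim t).const_mul (K s t)).const_add
      (rew s)
    refine this.congr fun n => ?_
    simp [MDP.erN, hs]
  have := hU (fun s => MDP.expRew K rew T s - W s)
    (fun s hs => by simp [h0 s hs, hW.1 s hs])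
    (fun s hs => by
      simp only [mul_sub, Finset.sum_sub_distrib]
      rw [h1 s hs, hW.2 s hs]
      ring) s
  linarith

theorem expRew_isBellman {K : S → S → ℝ} (hK : ∀ s t, 0 ≤ K s t)
    (hK1 : ∀ s, ∑ t, K s t = 1) {rew : S → ℝ} (hr : ∀ s, 0 ≤ rew s) {T : Set S}
    (hT : ∀ s, MDP.reach K T s = 1) :
    IsBellman K rew T (MDP.expRew K rew T) ∧ ∀ s, 0 ≤ MDP.expRew K rew T s := by
  have hU := dirichletUnique_of_reach hK hK1 hT
  obtain ⟨W, hW⟩ := exists_isBellman hU rew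
  have hW0 : ∀ s, 0 ≤ W s := nonneg_of_superharmonic hK hK1 hT (fun s hs => (hW.1 s hs).ge)
    fun s hs => by
      have := hr s
      rw [hW.2 s hs]
      linarith
  have : MDP.expRew K rew T = W := funext fun s => expRew_eq hK hr hU hW0 hW s
  rw [this]
  exact ⟨hW, hW0⟩

end Chain

/-! ### Local analysis of a partition -/

namespace HMDP

variable {S A ι : Type} {Y : ℕ} [Fintype S] [Fintype A] [Fintype ι]

/-- `E` (expected reward before leaving) and `h j` (probability of leaving through the `j`-th
successor) solve the local linear equations of `part i` under the actions `a`, and the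
homogeneous local system has only the trivial solution. -/
structure IsLocalSolution (H : HMDP S A ι Y) (i : ι) (a : S → A) (E : S → ℝ)
    (h : Fin Y → S → ℝ) : Prop where
  E_nonneg : ∀ s, 0 ≤ E s
  h_nonneg : ∀ j s, 0 ≤ h j s
  E_eq : ∀ s ∈ H.part i,
    E s = H.r s + ∑ t, H.P s (a s) t * (if t ∈ H.part i then E t else 0)
  h_eq : ∀ j, ∀ s ∈ H.part i, h j s = ∑ t, H.P s (a s) t *
    (if t ∈ H.part i then h j t else if t = H.suc i j then 1 else 0)
  unique : ∀ D : S → ℝ,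
    (∀ s ∈ H.part i, D s = ∑ t, H.P s (a s) t * (if t ∈ H.part i then D t else 0)) →
    ∀ s ∈ H.part i, D s = 0

namespace IsLocalSolution

variable {H : HMDP S A ι Y} {i : ι} {a : S → A} {E : S → ℝ} {h : Fin Y → S → ℝ}

/-- Off the partition, the exit probabilities act as point evaluation on the successor
states. -/
theorem sum_h_eq (hL : H.IsLocalSolution i a E h) (hH : H.IsHMDP) (g : S → ℝ) {s : S}
    (hs : s ∈ H.part i) :
    ∑ j, h j s * g (H.suc i j) = ∑ t, H.P s (a s) t *
      (if t ∈ H.part i then ∑ j, h j t * g (H.suc i j) else g t) := by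
  obtain ⟨-, -, -, -, -, hsuc, -⟩ := hH
  obtain ⟨hinj, -, hcov⟩ := hsuc i
  have h1 : ∑ j, h j s * g (H.suc i j) = ∑ j, (∑ t, H.P s (a s) t *
      (if t ∈ H.part i then h j t else if t = H.suc i j then 1 else 0)) * g (H.suc i j) :=
    Finset.sum_congr rfl fun j _ => by rw [← hL.h_eq j s hs]
  rw [h1]
  simp only [Finset.sum_mul]
  rw [Finset.sum_comm]
  refine Finset.sum_congr rfl fun t _ => ?_
  simp only [mul_assoc]
  rw [← Finset.mul_sum]
  by_cases hP : H.P s (a s) t = 0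
  · simp [hP]
  congr 1
  by_cases ht : t ∈ H.part i
  · simp [ht]
  · obtain ⟨j, rfl⟩ := hcov t ⟨ht, s, hs, _, hP⟩
    simp [ht, hinj.eq_iff]

/-- Any solution `V` of the global equations on `part i` splits into the reward collected
inside the partition and the value at the exit. -/
theorem eq_add_sum (hL : H.IsLocalSolution i a E h) (hH : H.IsHMDP) {V c F : S → ℝ}
    (hV : ∀ s ∈ H.part i, V s = c s + ∑ t, H.P s (a s) t * V t)
    (hF : ∀ s ∈ H.part i,
      F s = c s + ∑ t, H.P s (a s) t * (if t ∈ H.part i then F t else 0)) {s : S}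
    (hs : s ∈ H.part i) : V s = F s + ∑ j, h j s * V (H.suc i j) := by
  have := hL.unique (fun s => V s - F s - ∑ j, h j s * V (H.suc i j)) (fun s hs => by
    rw [hL.sum_h_eq hH V hs, hV s hs, hF s hs, add_sub_add_left_eq_sub,
      ← Finset.sum_sub_distrib, ← Finset.sum_sub_distrib]
    refine Finset.sum_congr rfl fun t _ => ?_
    split_ifs <;> ring) s hs
  linarith

theorem sum_h_one (hL : H.IsLocalSolution i a E h) (hH : H.IsHMDP)
    (ha : ∀ s ∈ H.part i, ∑ t, H.P s (a s) t = 1) {s : S} (hs : s ∈ H.part i) :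
    ∑ j, h j s = 1 := by
  have := hL.eq_add_sum hH (V := fun _ => 1) (c := fun _ => 0) (F := fun _ => 0)
    (fun s hs => by simp [ha s hs]) (fun s _ => by simp) hs
  simpa using this.symm

theorem h_eq_zero (hL : H.IsLocalSolution i a E h) {j : Fin Y}
    (hj : ∀ s ∈ H.part i, ∀ b, H.P s b (H.suc i j) = 0) {s : S} (hs : s ∈ H.part i) :
    h j s = 0 := by
  refine hL.unique (h j) (fun s hs => ?_) s hs
  rw [hL.h_eq j s hs]
  refine Finset.sum_congr rfl fun t _ => ?_
  by_cases ht : t = H.suc i j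
  · subst ht; simp [hj s hs]
  · simp [ht]

end IsLocalSolution

theorem subMDP_isMDP {H : HMDP S A ι Y} (hM : H.toMDP.IsMDP) (i : ι) :
    (∀ s b t, 0 ≤ (H.subMDP i).P s b t) ∧ ∀ s, 0 ≤ (H.subMDP i).r s := by
  obtain ⟨h0, -, hr⟩ := hM
  constructor
  · rintro (_ | s) (_ | b) (_ | t) <;> simp only [subMDP] <;> try split_ifs
    all_goals first | exact h0 _ _ _ | norm_num
  · rintro (_ | s) <;> simp only [subMDP] <;> try split_ifs
    all_goals first | exact hr _ | norm_num

/-- Inside the partition a policy of the subMDP picks an enabled action of the hMDP. -/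
theorem subMDP_policy_some {H : HMDP S A ι Y} {i : ι} {τ : Option S → Option A}
    (hτ : (H.subMDP i).IsPolicy τ) {s : S} (hs : s ∈ H.part i) :
    ∃ b, τ (some s) = some b ∧ ∑ t, H.P s b t ≠ 0 := by
  have h := hτ (some s)
  rcases hb : τ (some s) with _ | b
  · rw [hb, Fintype.sum_option] at h
    simp [subMDP, hs] at h
  · rw [hb, Fintype.sum_option] at h
    exact ⟨b, rfl, by simpa [subMDP, hs] using h⟩

theorem subMDP_policy_none {H : HMDP S A ι Y} {i : ι} {τ : Option S → Option A}
    (hτ : (H.subMDP i).IsPolicy τ) {s : Option S} (hs : ∀ s' ∈ H.part i, s ≠ some s') :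
    τ s = none := by
  have h := hτ s
  rcases hb : τ s with _ | b
  · rfl
  · rw [hb, Fintype.sum_option] at h
    rcases s with _ | s
    · simp [subMDP] at h
    · have : s ∉ H.part i := fun hs' => hs s hs' rfl
      simp [subMDP, this] at h

/-- The reachability probabilities and expected rewards of the subMDP solve the local
equations. -/
theorem isLocalSolution_subMDP {H : HMDP S A ι Y} (hM : H.toMDP.IsMDP) (hH : H.IsHMDP)
    {i : ι} {τ : Option S → Option A} (hτ : (H.subMDP i).IsPolicy τ)
    (hTsub : ∀ s, (H.subMDP i).PrR τ {none} s = 1) {a : S → A}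
    (ha : ∀ s ∈ H.part i, τ (some s) = some (a s)) :
    H.IsLocalSolution i a (fun s => (H.subMDP i).ER τ (some s))
      (fun j s => (H.subMDP i).PrR τ {some (H.suc i j)} (some s)) := by
  obtain ⟨hP0, hr0⟩ := subMDP_isMDP hM i
  set K := (H.subMDP i).stepOf τ with hKdef
  have hK : ∀ s t, 0 ≤ K s t := fun s t => hP0 _ _ _
  have hKnone : ∀ f : Option S → ℝ, ∑ t, K none t * f t = f none := by
    intro f
    have h1 : τ none = none := subMDP_policy_none hτ (by simp)
    rw [Fintype.sum_option]
    simp [hKdef, MDP.stepOf, h1, subMDP]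
  have hKout : ∀ s ∉ H.part i, ∀ f : Option S → ℝ, ∑ t, K (some s) t * f t = f none := by
    intro s hs f
    have h1 : τ (some s) = none := subMDP_policy_none hτ (by
      rintro s' hs' h; exact hs (Option.some.inj h ▸ hs'))
    rw [Fintype.sum_option]
    simp [hKdef, MDP.stepOf, h1, subMDP, hs]
  have hKin : ∀ s ∈ H.part i, ∀ f : Option S → ℝ,
      ∑ t, K (some s) t * f t = ∑ t, H.P s (a s) t * f (some t) := by
    intro s hs f
    rw [Fintype.sum_option]
    simp [hKdef, MDP.stepOf, ha s hs, subMDP, hs]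
  have hK1 : ∀ s, ∑ t, K s t = 1 := by
    rintro (_ | s)
    · simpa using hKnone fun _ => 1
    · by_cases hs : s ∈ H.part i
      · have h1 := hKin s hs fun _ => 1
        simp only [mul_one] at h1
        rw [h1]
        obtain ⟨b, hb, hb0⟩ := subMDP_policy_some hτ hs
        obtain rfl : a s = b := Option.some.inj ((ha s hs).symm.trans hb)
        exact (hM.2.1 s (a s)).resolve_left hb0
      · simpa using hKout s hs fun _ => 1
  have hsuc : ∀ j, H.suc i j ∉ H.part i := (hH.2.2.2.2.2.1 i).2.1
  have hU : DirichletUnique K {none} := dirichletUnique_of_reach hK hK1 hTsub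
  obtain ⟨hB, hE0⟩ := expRew_isBellman hK hK1 hr0 hTsub
  have hEnone : MDP.expRew K (H.subMDP i).r {none} none = 0 := hB.1 none rfl
  have hEout : ∀ s ∉ H.part i, MDP.expRew K (H.subMDP i).r {none} (some s) = 0 := by
    intro s hs
    rw [hB.2 (some s) (by simp), hKout s hs, hEnone]
    simp [subMDP, hs]
  have hhnone : ∀ j, MDP.reach K {some (H.suc i j)} none = 0 := by
    intro j
    refine reach_of_absorbing (by simp) fun t ht => ?_
    have h1 : τ none = none := subMDP_policy_none hτ (by simp)
    rcases t with _ | t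
    · exact absurd rfl ht
    · simp [hKdef, MDP.stepOf, h1, subMDP]
  have hhout : ∀ j, ∀ s ∉ H.part i,
      MDP.reach K {some (H.suc i j)} (some s) = if s = H.suc i j then 1 else 0 := by
    intro j s hs
    split_ifs with h
    · exact reach_of_mem (by simp [h])
    · rw [reach_of_notMem hK hK1 (by simpa using h), hKout s hs, hhnone]
  refine ⟨fun s => hE0 _, fun j s => reach_nonneg hK _ _, fun s hs => ?_, fun j s hs => ?_,
    fun D hD s hs => ?_⟩
  · change MDP.expRew K (H.subMDP i).r {none} (some s) = _
    rw [hB.2 (some s) (by simp), hKin s hs]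
    congr 1
    · simp [subMDP, hs]
    · refine Finset.sum_congr rfl fun t _ => ?_
      split_ifs with ht
      · rfl
      · rw [hEout t ht]
  · have hne : (some s : Option S) ∉ ({some (H.suc i j)} : Set (Option S)) := by
      intro h
      have : s = H.suc i j := Option.some.inj h
      exact hsuc j (this ▸ hs)
    change MDP.reach K {some (H.suc i j)} (some s) = _
    rw [reach_of_notMem hK hK1 hne, hKin s hs]
    refine Finset.sum_congr rfl fun t _ => ?_
    split_ifs with ht h
    · rfl
    · rw [hhout j t ht, if_pos h]
    · rw [hhout j t ht, if_neg h]
  · have := hU (fun s => s.elim 0 fun s => if s ∈ H.part i then D s else 0) (by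
      rintro s rfl; rfl) (by
      rintro (_ | s) hs
      · exact absurd rfl hs
      · by_cases hs' : s ∈ H.part i
        · rw [hKin s hs']
          simpa [hs'] using hD s hs'
        · rw [hKout s hs']
          simp [hs']) (some s)
    simpa [hs] using this

/-! ### Transfer between the hMDP and the macro-MDP -/

/-- A transition entering a nontrivial partition from outside enters at its entry state. -/
theorem eq_entry_of_step {H : HMDP S A ι Y} (hH : H.IsHMDP) {s t : S} {b : A}
    (hP : H.P s b t ≠ 0) {k : ι} (hs : s ∉ H.part k) (ht : t ∈ H.part k) : t = H.entry k := by
  by_contra hne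
  exact hs ((hH.2.2.2.2.1 k t ht hne).2 s b hP)

theorem choose_part {H : HMDP S A ι Y} (hH : H.IsHMDP) {s : S} {i : ι} (hs : s ∈ H.part i)
    (h : ∃ i, s ∈ H.part i) : h.choose = i := by
  by_contra hne
  exact Finset.disjoint_left.mp (hH.1 _ _ hne) h.choose_spec hs

/-- A policy `σ` following the local policies inside the partitions and a policy `σ'` of the
macro-MDP that agrees with `σ` on the trivial states have the same expected reward. -/
theorem umacro_ER_eq {H : HMDP S A ι Y} (hM : H.toMDP.IsMDP) (hH : H.IsHMDP)
    {σ σ' : S → A} (hσ : H.toMDP.IsPolicy σ) (hT : ∀ s, H.toMDP.PrR σ H.target s = 1)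
    {E : ι → S → ℝ} {h : ι → Fin Y → S → ℝ}
    (hL : ∀ i, H.IsLocalSolution i σ (E i) (h i)) {u : Param ι Y → ℝ}
    (hup : ∀ i j, u (.p i j) = h i j (H.entry i)) (huq : ∀ i, u (.q i) = E i (H.entry i))
    (hσσ' : ∀ s, (∀ i, s ∉ H.part i) → σ' s = σ s) :
    (H.umacroInst u).ER σ' H.init = H.toMDP.ER σ H.init := by
  have hM' := hM
  have hH' := hH
  obtain ⟨hP0, hP1, hr0⟩ := hM'
  obtain ⟨hdisj, -, hent, -, hint, hsuc, htar⟩ := hH'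
  have hK : ∀ s t, 0 ≤ H.toMDP.stepOf σ s t := fun s t => hP0 _ _ _
  have hK1 : ∀ s, ∑ t, H.toMDP.stepOf σ s t = 1 := fun s =>
    (hP1 s (σ s)).resolve_left (hσ s)
  have hUH := dirichletUnique_of_reach hK hK1 hT
  obtain ⟨hB, hV0⟩ := expRew_isBellman hK hK1 hr0 hT
  set V := MDP.expRew (H.toMDP.stepOf σ) H.r H.target with hVdef
  set K' := (H.umacroInst u).stepOf σ' with hK'
  have hpart : ∀ {s i}, s ∈ H.part i → ∀ {k}, s ∈ H.part k → k = i := by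
    intro s i hi k hk
    by_contra hne
    exact Finset.disjoint_left.mp (hdisj _ _ hne) hk hi
  -- the rows of the macro kernel and its rewards
  have hrow : ∀ i, ∀ s ∈ H.part i, ∀ f : S → ℝ,
      ∑ t, K' s t * f t = ∑ j, h i j (H.entry i) * f (H.suc i j) := by
    intro i s hs f
    have hex : ∃ i, s ∈ H.part i := ⟨i, hs⟩
    simp only [hK', MDP.stepOf, umacroInst, dif_pos hex, choose_part hH hs hex, hup]
    simp only [Finset.sum_mul]
    rw [Finset.sum_comm]
    refine Finset.sum_congr rfl fun j _ => ?_
    simp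
  have htriv : ∀ s, (∀ i, s ∉ H.part i) → ∀ t, K' s t = H.toMDP.stepOf σ s t := by
    intro s hs t
    have hex : ¬ ∃ i, s ∈ H.part i := fun ⟨i, hi⟩ => hs i hi
    simp only [hK', MDP.stepOf, umacroInst, dif_neg hex, hσσ' s hs]
  have hrew : ∀ i, ∀ s ∈ H.part i, (H.umacroInst u).r s = E i (H.entry i) := by
    intro i s hs
    have hex : ∃ i, s ∈ H.part i := ⟨i, hs⟩
    simp only [umacroInst, dif_pos hex, choose_part hH hs hex, huq]
  have hrewt : ∀ s, (∀ i, s ∉ H.part i) → (H.umacroInst u).r s = H.r s := by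
    intro s hs
    have hex : ¬ ∃ i, s ∈ H.part i := fun ⟨i, hi⟩ => hs i hi
    simp only [umacroInst, dif_neg hex]
  have hK'0 : ∀ s t, 0 ≤ K' s t := by
    intro s t
    by_cases hs : ∃ i, s ∈ H.part i
    · obtain ⟨i, hs⟩ := hs
      have h1 := hrow i s hs fun t' => if t' = t then 1 else 0
      simp only [mul_ite, mul_one, mul_zero, Finset.sum_ite_eq', Finset.mem_univ, if_true] at h1
      rw [h1]
      refine Finset.sum_nonneg fun j _ => ?_
      split_ifs
      · exact (hL i).h_nonneg _ _
      · exact le_rfl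
    · push Not at hs
      rw [htriv s hs]
      exact hK s t
  have hr'0 : ∀ s, 0 ≤ (H.umacroInst u).r s := by
    intro s
    by_cases hs : ∃ i, s ∈ H.part i
    · obtain ⟨i, hs⟩ := hs
      rw [hrew i s hs]
      exact (hL i).E_nonneg _
    · push Not at hs
      rw [hrewt s hs]
      exact hr0 s
  -- successors with positive exit probability are trivial states or entry states
  have hsucgood : ∀ i j, h i j (H.entry i) ≠ 0 → ∀ k, H.suc i j ∈ H.part k →
      H.suc i j = H.entry k := by
    intro i j hne k hk
    by_contra hcon
    refine hne ((hL i).h_eq_zero (fun s hs b => ?_) (hent i))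
    by_contra hP
    refine hcon (eq_entry_of_step hH hP (fun hs' => ?_) hk)
    have hki := hpart hs hs'
    subst hki
    exact (hsuc k).2.1 j hk
  -- a harmonic function of the macro chain extends to a harmonic function of the hMDP chain
  have hU' : DirichletUnique K' H.target := by
    intro g hg0 hg1
    let G : S → ℝ := fun s =>
      if hs : ∃ i, s ∈ H.part i then
        ∑ j, h hs.choose j s * g (H.suc hs.choose j) else g s
    have hGin : ∀ i, ∀ s ∈ H.part i, G s = ∑ j, h i j s * g (H.suc i j) := by
      intro i s hs
      have hex : ∃ i, s ∈ H.part i := ⟨i, hs⟩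
      simp only [G, dif_pos hex, choose_part hH hs hex]
    have hGtriv : ∀ s, (∀ i, s ∉ H.part i) → G s = g s := by
      intro s hs
      have hex : ¬ ∃ i, s ∈ H.part i := fun ⟨i, hi⟩ => hs i hi
      simp only [G, dif_neg hex]
    have hgin : ∀ i, ∀ s ∈ H.part i, g s = ∑ j, h i j (H.entry i) * g (H.suc i j) :=
      fun i s hs => by rw [hg1 s (htar i s hs), hrow i s hs]
    have hGgood : ∀ t, (∀ k, t ∈ H.part k → t = H.entry k) → G t = g t := by
      intro t ht
      by_cases hex : ∃ k, t ∈ H.part k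
      · obtain ⟨k, hk⟩ := hex
        rw [hGin k t hk, hgin k t hk, ← ht k hk]
      · push Not at hex
        exact hGtriv t hex
    have hG : ∀ s, G s = 0 := by
      refine hUH G (fun s hs => ?_) (fun s hs => ?_)
      · rw [hGtriv s fun i hi => htar i s hi hs, hg0 s hs]
      · by_cases hex : ∃ i, s ∈ H.part i
        · obtain ⟨i, hi⟩ := hex
          rw [hGin i s hi, (hL i).sum_h_eq hH g hi]
          refine Finset.sum_congr rfl fun t _ => ?_
          by_cases hP : H.P s (σ s) t = 0
          · simp [MDP.stepOf, hP]
          change _ = H.P s (σ s) t * G t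
          congr 1
          split_ifs with ht
          · rw [hGin i t ht]
          · refine (hGgood t fun k hk => eq_entry_of_step hH hP (fun hs' => ?_) hk).symm
            exact ht (hpart hi hs' ▸ hk)
        · push Not at hex
          rw [hGtriv s hex, hg1 s hs]
          refine Finset.sum_congr rfl fun t _ => ?_
          rw [htriv s hex]
          by_cases hP : H.P s (σ s) t = 0
          · simp [MDP.stepOf, hP]
          rw [hGgood t fun k hk => eq_entry_of_step hH hP (hex k) hk]
    intro s
    by_cases hex : ∃ i, s ∈ H.part i
    · obtain ⟨i, hi⟩ := hex
      rw [hgin i s hi, ← hGin i _ (hent i), hG]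
    · push Not at hex
      rw [← hGtriv s hex, hG]
  -- the value function of the hMDP, read at the entry states, solves the macro equations
  let W : S → ℝ := fun s => if hs : ∃ i, s ∈ H.part i then V (H.entry hs.choose) else V s
  have hWin : ∀ i, ∀ s ∈ H.part i, W s = V (H.entry i) := by
    intro i s hs
    have hex : ∃ i, s ∈ H.part i := ⟨i, hs⟩
    simp only [W, dif_pos hex, choose_part hH hs hex]
  have hWtriv : ∀ s, (∀ i, s ∉ H.part i) → W s = V s := by
    intro s hs
    have hex : ¬ ∃ i, s ∈ H.part i := fun ⟨i, hi⟩ => hs i hi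
    simp only [W, dif_neg hex]
  have hWgood : ∀ t, (∀ k, t ∈ H.part k → t = H.entry k) → W t = V t := by
    intro t ht
    by_cases hex : ∃ k, t ∈ H.part k
    · obtain ⟨k, hk⟩ := hex
      rw [hWin k t hk, ← ht k hk]
    · push Not at hex
      exact hWtriv t hex
  have hW0 : ∀ s, 0 ≤ W s := by
    intro s
    simp only [W]
    split_ifs <;> exact hV0 _
  have hWB : IsBellman K' (H.umacroInst u).r H.target W := by
    refine ⟨fun s hs => ?_, fun s hs => ?_⟩
    · rw [hWtriv s fun i hi => htar i s hi hs]
      exact hB.1 s hs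
    · by_cases hex : ∃ i, s ∈ H.part i
      · obtain ⟨i, hi⟩ := hex
        rw [hWin i s hi, hrew i s hi, hrow i s hi,
          (hL i).eq_add_sum hH (V := V) (c := H.r) (F := E i)
            (fun s hs => hB.2 s (htar i s hs)) (hL i).E_eq (hent i)]
        congr 1
        refine Finset.sum_congr rfl fun j _ => ?_
        by_cases hj : h i j (H.entry i) = 0
        · simp [hj]
        · rw [hWgood _ (hsucgood i j hj)]
      · push Not at hex
        rw [hWtriv s hex, hrewt s hex]
        refine (hB.2 s hs).trans ?_
        congr 1
        refine Finset.sum_congr rfl fun t _ => ?_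
        rw [htriv s hex]
        by_cases hP : H.P s (σ s) t = 0
        · simp [MDP.stepOf, hP]
        rw [hWgood t fun k hk => eq_entry_of_step hH hP (hex k) hk]
  have hinit : ∀ k, H.init ∈ H.part k → H.init = H.entry k := by
    intro k hk
    by_contra hne
    exact (hint k _ hk hne).1 rfl
  exact (expRew_eq hK'0 hr'0 hU' hW0 hWB H.init).trans (hWgood _ hinit)

/-- The row sum of the uncertain macro-MDP at a state of a nontrivial partition. -/
theorem umacro_row_sum {H : HMDP S A ι Y} (hH : H.IsHMDP) {u : Param ι Y → ℝ} {i : ι} {s : S}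
    (hs : s ∈ H.part i) (b : A) :
    ∑ t, (H.umacroInst u).P s b t = ∑ j, u (.p i j) := by
  have hex : ∃ i, s ∈ H.part i := ⟨i, hs⟩
  simp only [umacroInst, dif_pos hex, choose_part hH hs hex]
  rw [Finset.sum_comm]
  simp

theorem liftPolicy_eq {H : HMDP S A ι Y} (hH : H.IsHMDP) (σs : ι → Option S → Option A)
    {i : ι} {s : S} (hs : s ∈ H.part i) : H.liftPolicy σs s = σs i (some s) := by
  have hex : ∃ i, s ∈ H.part i := ⟨i, hs⟩
  simp only [liftPolicy, dif_pos hex, choose_part hH hs hex]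

/-- A policy of the restricted MDP is a policy of the hMDP that follows the partial
policy. -/
theorem restrict_policy {M : MDP S A} {τ : S → Option A} {σ : S → A} :
    (M.restrict τ).IsPolicy σ ↔ M.IsPolicy σ ∧ ∀ s b, τ s = some b → σ s = b := by
  constructor
  · intro hσ
    have hb : ∀ s b, τ s = some b → σ s = b := by
      intro s b hb
      by_contra hne
      refine hσ s ?_
      simp [MDP.restrict, hb, hne]
    refine ⟨fun s => ?_, hb⟩
    have h := hσ s
    rcases hτ : τ s with _ | b
    · simpa [MDP.restrict, hτ] using h
    · simpa [MDP.restrict, hτ, hb s b hτ] using h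
  · rintro ⟨hσ, hb⟩ s
    have h := hσ s
    rcases hτ : τ s with _ | b
    · simpa [MDP.restrict, hτ] using h
    · simpa [MDP.restrict, hτ, hb s b hτ] using h

theorem restrict_ER {M : MDP S A} {τ : S → Option A} {σ : S → A}
    (hb : ∀ s b, τ s = some b → σ s = b) (s : S) : (M.restrict τ).ER σ s = M.ER σ s := by
  have : (M.restrict τ).stepOf σ = M.stepOf σ := by
    funext s t
    rcases hτ : τ s with _ | b
    · simp [MDP.restrict, MDP.stepOf, hτ]
    · simp [MDP.restrict, MDP.stepOf, hτ, hb s b hτ]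
  simp only [MDP.ER, this]
  rfl

theorem umacro_maxER_eq {H : HMDP S A ι Y} (hM : H.toMDP.IsMDP) (hH : H.IsHMDP)
    (hT : ∀ σ, H.toMDP.IsPolicy σ → ∀ s, H.toMDP.PrR σ H.target s = 1)
    (hTsub : ∀ i σ, (H.subMDP i).IsPolicy σ → ∀ s, (H.subMDP i).PrR σ {none} s = 1)
    {σs : ι → Option S → Option A} (hσs : H.LocallyOptimal σs) :
    (H.umacroInst (H.ustar σs)).maxER H.init =
      (H.toMDP.restrict (H.liftPolicy σs)).maxER H.init := by
  have hent := hH.2.2.1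
  -- a policy following the lifted policy solves all local problems
  have hloc : ∀ σ : S → A, (∀ s b, H.liftPolicy σs s = some b → σ s = b) → ∀ i,
      H.IsLocalSolution i σ (fun s => (H.subMDP i).ER (σs i) (some s))
        (fun j s => (H.subMDP i).PrR (σs i) {some (H.suc i j)} (some s)) := by
    intro σ hσ i
    refine isLocalSolution_subMDP hM hH (hσs i).1 (hTsub i _ (hσs i).1) fun s hs => ?_
    obtain ⟨b, hb, -⟩ := subMDP_policy_some (hσs i).1 hs
    rw [hb, hσ s b (by rw [liftPolicy_eq hH σs hs, hb])]
  have hER : ∀ σ σ' : S → A, (H.toMDP.restrict (H.liftPolicy σs)).IsPolicy σ →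
      (∀ s, (∀ i, s ∉ H.part i) → σ' s = σ s) →
      (H.umacroInst (H.ustar σs)).ER σ' H.init =
        (H.toMDP.restrict (H.liftPolicy σs)).ER σ H.init := by
    intro σ σ' hσ hσσ'
    rw [restrict_policy] at hσ
    rw [restrict_ER hσ.2]
    exact umacro_ER_eq hM hH hσ.1 (hT σ hσ.1) (hloc σ hσ.2) (fun i j => rfl)
      (fun i => (hσs i).2.symm) hσσ'
  have hto : ∀ σ : S → A, (H.toMDP.restrict (H.liftPolicy σs)).IsPolicy σ →
      (H.umacroInst (H.ustar σs)).IsPolicy σ := by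
    intro σ hσ s
    rw [restrict_policy] at hσ
    by_cases hex : ∃ i, s ∈ H.part i
    · obtain ⟨i, hi⟩ := hex
      have h1 := (hloc σ hσ.2 i).sum_h_one hH
        (fun s _ => (hM.2.1 s (σ s)).resolve_left (hσ.1 s)) (hent i)
      rw [umacro_row_sum hH hi]
      exact ne_of_eq_of_ne h1 one_ne_zero
    · have h := hσ.1 s
      simpa only [umacroInst, dif_neg hex] using h
  -- a macro policy is completed inside the partitions by the local policies
  have hfrom : ∀ σ' : S → A, (H.umacroInst (H.ustar σs)).IsPolicy σ' → ∃ σ : S → A,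
      (H.toMDP.restrict (H.liftPolicy σs)).IsPolicy σ ∧
        ∀ s, (∀ i, s ∉ H.part i) → σ' s = σ s := by
    intro σ' hσ'
    refine ⟨fun s => (H.liftPolicy σs s).getD (σ' s), ?_, fun s hs => ?_⟩
    · rw [restrict_policy]
      refine ⟨fun s => ?_, fun s b hb => by simp [hb]⟩
      by_cases hex : ∃ i, s ∈ H.part i
      · obtain ⟨i, hi⟩ := hex
        obtain ⟨b, hb, hb0⟩ := subMDP_policy_some (hσs i).1 hi
        simpa [liftPolicy_eq hH σs hi, hb] using hb0
      · have h := hσ' s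
        have hl : H.liftPolicy σs s = none := by simp only [liftPolicy, dif_neg hex]
        simpa only [umacroInst, dif_neg hex, hl, Option.getD_none] using h
    · have hex : ¬ ∃ i, s ∈ H.part i := fun ⟨i, hi⟩ => hs i hi
      simp only [liftPolicy, dif_neg hex, Option.getD_none]
  -- equality of the sets of attainable rewards, which also covers the case of no policy
  unfold MDP.maxER iSup
  congr 1
  ext x
  constructor
  · rintro ⟨⟨σ', hσ'⟩, rfl⟩
    obtain ⟨σ, hσ, hσσ'⟩ := hfrom σ' hσ'
    exact ⟨⟨σ, hσ⟩, (hER σ σ' hσ hσσ').symm⟩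
  · rintro ⟨⟨σ, hσ⟩, rfl⟩
    exact ⟨⟨σ, hto σ hσ⟩, hER σ σ hσ fun _ _ => rfl⟩

end HMDP

/-- **Exactness at the point region.**  Let `M` be a hierarchical MDP with
optimal local subpolicies and target states `T`, `umacro(M)` its uncertain
macro-MDP and `u*` the valuation with `u*(p_{i,j}) = res_i(j)` and
`u*(q_i) = res_i(Y)`.  For the point region `R = {u*}`:
`min_{u ∈ R} maxER_{umacro(M)[u]}(◊T) = max_{u ∈ R} maxER_{umacro(M)[u]}(◊T)
 = maxER_M(◊T)`. -/
theorem point_region_exact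
    {S A ι : Type} {Y : ℕ} [Fintype S] [Fintype A] [Fintype ι]
    (H : HMDP S A ι Y) (hM : H.toMDP.IsMDP) (hH : H.IsHMDP)
    (hT : ∀ σ, H.toMDP.IsPolicy σ → ∀ s, H.toMDP.PrR σ H.target s = 1)
    (hTsub : ∀ i σ, (H.subMDP i).IsPolicy σ → ∀ s, (H.subMDP i).PrR σ {none} s = 1)
    (hopt : H.HasOptimalLocalSubpolicies)
    (σs : ι → Option S → Option A) (hσs : H.LocallyOptimal σs) :
    sInf ((fun u => (H.umacroInst u).maxER H.init) '' {H.ustar σs}) =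
        H.toMDP.maxER H.init ∧
      sSup ((fun u => (H.umacroInst u).maxER H.init) '' {H.ustar σs}) =
        H.toMDP.maxER H.init := by
  have h : (H.umacroInst (H.ustar σs)).maxER H.init = H.toMDP.maxER H.init :=
    (HMDP.umacro_maxER_eq hM hH hT hTsub hσs).trans (hopt σs hσs)
  simp [h]
end
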